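/- arXiv:2601.22728 — 9 statements merged into one kernel-verified Lean document; each statement's English description precedes it below -/
import Mathlib

section
/- There is an absolute constant c > 0 with the following property. Let (X, dist) be a metric space, let P ⊆ X be a finite subset with |P| = n ≥ 2, and let ε ∈ (0, 1/2). Then there exists a pair decomposition W of P, all of whose pairs are ε-stable (i.e., W is a (1/ε)-ABC of P), whose size is at most c · (n/ε) · log n. -/
/-!
At threshold `t`, cluster `P` into the connected components of the graph joining points at distance
at most `t`; a component has diameter at most `n * t` (`exists_linkage`). Put `η = ε / 4`,
`q = 1 + η` and fix a scale `q ^ i`. The components at threshold `η * q ^ i / n` have diameter at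
most `η * q ^ i`, so a component with a chosen point `c`, paired with the annulus
`(1 - η) * q ^ i ≤ dist c · ≤ (q + η) * q ^ i`, is an `ε`-stable pair.

To bound the number of such pairs, fix an order on `P` and call the least point of a component its
leader. If `q ^ i ≤ dist x y < q ^ (i + 1)`, then `x` and `y` lie in different components at
threshold `η * q ^ i / n` and in the same one at threshold `q ^ (i + 1)`. Hence one of their two
leaders `c` stops being a leader between these thresholds, and the pair built from `(c, i)` covers
`{x, y}`. As leadership is lost only once, the scales used for a given `c` lie in a window of
length about `log (n / η) / log q`, which is `O(log n / ε)` if `1 / n ≤ ε`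
(`scale_window`). If `ε < 1 / n`, the at most `n ^ 2 ≤ n / ε` pairs of singletons suffice.
-/

/-- `dmin A B` is the minimum distance between the nonempty finite sets `A` and `B`,
realized as the infimum of the (finite, nonempty) set of pairwise distances. -/
noncomputable def dmin {X : Type*} [MetricSpace X] (A B : Finset X) : ℝ :=
  sInf {r : ℝ | ∃ a ∈ A, ∃ b ∈ B, r = dist a b}

/-- `dmax A B` is the maximum distance between the nonempty finite sets `A` and `B`. -/
noncomputable def dmax {X : Type*} [MetricSpace X] (A B : Finset X) : ℝ :=
  sSup {r : ℝ | ∃ a ∈ A, ∃ b ∈ B, r = dist a b}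

/-- `W` is a pair decomposition of the finite set `P`. -/
def PairDecomp {X : Type*} (P : Finset X) (W : Finset (Finset X × Finset X)) : Prop :=
  (∀ pr ∈ W, pr.1 ⊆ P ∧ pr.2 ⊆ P ∧ pr.1.Nonempty ∧ pr.2.Nonempty ∧ Disjoint pr.1 pr.2) ∧
  ∀ x ∈ P, ∀ y ∈ P, x ≠ y →
    ∃ pr ∈ W, (x ∈ pr.1 ∧ y ∈ pr.2) ∨ (x ∈ pr.2 ∧ y ∈ pr.1)

/-- A pair `{A, B}` is `ε`-stable if `dmax(A,B) ≤ (1+2ε)·d(A,B)`. -/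
def IsStable {X : Type*} [MetricSpace X] (ε : ℝ) (A B : Finset X) : Prop :=
  dmax A B ≤ (1 + 2 * ε) * dmin A B

/-- Distances in `A × B` confined to `[lo, hi]` with `hi ≤ (1 + 2ε) lo` give stability. -/
lemma isStable_of_bounds {X : Type*} [MetricSpace X] {ε lo hi : ℝ} {A B : Finset X}
    (hA : A.Nonempty) (hB : B.Nonempty) (hε : 0 < ε)
    (hlo : ∀ a ∈ A, ∀ b ∈ B, lo ≤ dist a b) (hhi : ∀ a ∈ A, ∀ b ∈ B, dist a b ≤ hi)
    (h : hi ≤ (1 + 2 * ε) * lo) : IsStable ε A B := by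
  obtain ⟨a, ha⟩ := hA
  obtain ⟨b, hb⟩ := hB
  have hne : {r : ℝ | ∃ a ∈ A, ∃ b ∈ B, r = dist a b}.Nonempty := ⟨_, a, ha, b, hb, rfl⟩
  have h1 : dmax A B ≤ hi := by
    apply csSup_le hne
    rintro _ ⟨a, ha, b, hb, rfl⟩
    exact hhi a ha b hb
  have h2 : lo ≤ dmin A B := by
    apply le_csInf hne
    rintro _ ⟨a, ha, b, hb, rfl⟩
    exact hlo a ha b hb
  unfold IsStable
  have : (1 + 2 * ε) * lo ≤ (1 + 2 * ε) * dmin A B := by gcongr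
  linarith

/-- Single-linkage clustering: `R t` is the relation of being joined by a chain of points of `P`
with steps of length at most `t`. A shortest chain has at most `P.card` steps, hence the bound
on the distance of related points. -/
lemma exists_linkage {X : Type*} [MetricSpace X] (P : Finset X) :
    ∃ R : ℝ → X → X → Prop,
      (∀ t, ∀ x ∈ P, R t x x) ∧ (∀ t x y, R t x y → R t y x) ∧
      (∀ t x y z, R t x y → R t y z → R t x z) ∧
      (∀ s t x y, s ≤ t → R s x y → R t x y) ∧
      (∀ t, ∀ x ∈ P, ∀ y ∈ P, dist x y ≤ t → R t x y) ∧
      (∀ t x y, 0 ≤ t → R t x y → dist x y ≤ P.card * t) ∧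
      (∀ t x y, R t x y → x ∈ P ∧ y ∈ P) := by
  classical
  let G : ℝ → SimpleGraph P := fun t => SimpleGraph.fromRel (fun a b : P => dist a b ≤ t)
  have hwalk : ∀ t, 0 ≤ t → ∀ a b : P, ∀ w : (G t).Walk a b, dist a b ≤ w.length * t := by
    intro t ht a b w
    induction w with
    | nil => simp
    | @cons u v w h p ih =>
      have h1 : dist u v ≤ t := by
        have := (SimpleGraph.fromRel_adj _ _ _).1 h
        rcases this.2 with h | h
        · exact h
        · rw [dist_comm]; exact h
      have := dist_triangle u v w
      simp only [SimpleGraph.Walk.length_cons]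
      push_cast
      linarith
  refine ⟨fun t x y => ∃ hx : x ∈ P, ∃ hy : y ∈ P, (G t).Reachable ⟨x, hx⟩ ⟨y, hy⟩,
    ?_, ?_, ?_, ?_, ?_, ?_, ?_⟩
  · exact fun t x hx => ⟨hx, hx, SimpleGraph.Reachable.refl _⟩
  · exact fun t x y ⟨hx, hy, h⟩ => ⟨hy, hx, h.symm⟩
  · exact fun t x y z ⟨hx, hy, h⟩ ⟨_, hz, h'⟩ => ⟨hx, hz, h.trans h'⟩
  · rintro s t x y hst ⟨hx, hy, h⟩
    refine ⟨hx, hy, h.mono ?_⟩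
    intro a b hab
    rw [SimpleGraph.fromRel_adj] at hab ⊢
    exact ⟨hab.1, hab.2.imp (fun h => h.trans hst) (fun h => h.trans hst)⟩
  · intro t x hx y hy h
    refine ⟨hx, hy, ?_⟩
    by_cases hxy : x = y
    · subst hxy; exact SimpleGraph.Reachable.refl _
    · apply SimpleGraph.Adj.reachable
      rw [SimpleGraph.fromRel_adj]
      exact ⟨fun h => hxy (congrArg Subtype.val h), Or.inl h⟩
  · rintro t x y ht ⟨hx, hy, h⟩
    obtain ⟨w, hw⟩ := h.exists_isPath
    have h1 := hwalk t ht _ _ w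
    have h2 : w.length < P.card := by simpa using hw.length_lt
    have h3 : (w.length : ℝ) ≤ P.card := by exact_mod_cast h2.le
    calc dist x y ≤ w.length * t := h1
      _ ≤ P.card * t := by gcongr
  · exact fun t x y ⟨hx, hy, _⟩ => ⟨hx, hy⟩

lemma log_nat_ge {n : ℕ} (hn : 2 ≤ n) : 1 / 2 ≤ Real.log n := by
  have h : (2 : ℝ) ≤ n := by exact_mod_cast hn
  have := Real.log_le_log (by norm_num) h
  have := Real.log_two_gt_d9
  linarith

/-- Two scales `i`, `j` whose threshold intervals `(η * q ^ i / n, q ^ (i + 1))` both contain the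
moment at which a point stops being a leader differ by `O(log n / ε)`. -/
lemma scale_window {n : ℕ} {ε : ℝ} (hn : 2 ≤ n) (hε : 0 < ε) (hε' : ε < 1 / 2)
    (hnε : 1 / (n : ℝ) ≤ ε) {i j : ℤ}
    (h : ε / 4 * (1 + ε / 4) ^ j / n < (1 + ε / 4) ^ (i + 1)) :
    j - i ≤ (⌈1 + 32 * Real.log n / ε⌉₊ : ℤ) := by
  have hn' : (2 : ℝ) ≤ n := by exact_mod_cast hn
  have hn0 : (0 : ℝ) < n := by linarith
  have hq : (0 : ℝ) < 1 + ε / 4 := by linarith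
  have h1 : (1 + ε / 4) ^ (j - i - 1) < (n : ℝ) ^ 4 := by
    have e : (1 + ε / 4) ^ j = (1 + ε / 4) ^ (j - i - 1) * (1 + ε / 4) ^ (i + 1) := by
      rw [← zpow_add₀ hq.ne']; congr 1; ring
    have hp : 0 < (1 + ε / 4) ^ (i + 1) := zpow_pos hq _
    rw [e, div_lt_iff₀ hn0] at h
    have h2 : ε / 4 * (1 + ε / 4) ^ (j - i - 1) < n := by
      by_contra! hc
      nlinarith
    have h3 : 1 ≤ ε * n := by rwa [div_le_iff₀ hn0] at hnε
    have h4 : (1 + ε / 4) ^ (j - i - 1) < 4 * (n : ℝ) ^ 2 := by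
      have hz : 0 < (1 + ε / 4) ^ (j - i - 1) := zpow_pos hq _
      nlinarith
    have h5 : (4 : ℝ) ≤ (n : ℝ) ^ 2 := by nlinarith
    nlinarith [sq_nonneg (n : ℝ)]
  have h2 := Real.log_lt_log (zpow_pos hq _) h1
  rw [Real.log_zpow, Real.log_pow] at h2
  have h3 : ε / 8 ≤ Real.log (1 + ε / 4) := by
    have h := Real.one_sub_inv_le_log_of_pos hq
    have : (1 + ε / 4)⁻¹ ≤ 1 - ε / 8 := by
      rw [inv_le_iff_one_le_mul₀ hq]
      nlinarith
    linarith
  have hl := log_nat_ge hn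
  have h5 : ((j - i : ℤ) : ℝ) ≤ 1 + 32 * Real.log n / ε := by
    by_contra! hc
    push_cast at hc h2
    have h6 : 32 * Real.log n / ε * (ε / 8) = 4 * Real.log n := by field_simp; norm_num
    have h7 : 0 < 32 * Real.log n / ε := by positivity
    have h8 : 32 * Real.log n / ε * (ε / 8) ≤ ((j : ℝ) - i - 1) * Real.log (1 + ε / 4) := by
      apply mul_le_mul _ h3 (by positivity) <;> linarith
    linarith
  exact_mod_cast h5.trans (Nat.le_ceil _)

/-- The case `ε < 1 / n`: all pairs of singletons. -/
lemma cover_singletons {X : Type*} [MetricSpace X] (P : Finset X) {ε : ℝ} (hε : 0 < ε) :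
    ∃ W : Finset (Finset X × Finset X), PairDecomp P W ∧ (∀ pr ∈ W, IsStable ε pr.1 pr.2) ∧
      W.card ≤ P.card * P.card := by
  classical
  refine ⟨P.offDiag.image (fun p => ({p.1}, {p.2})), ⟨?_, ?_⟩, ?_, ?_⟩
  · intro pr hpr
    obtain ⟨⟨a, b⟩, hp, rfl⟩ := Finset.mem_image.1 hpr
    obtain ⟨ha, hb, hab⟩ := Finset.mem_offDiag.1 hp
    simp_all
  · intro x hx y hy hxy
    refine ⟨({x}, {y}), Finset.mem_image.2 ⟨(x, y), ?_, rfl⟩, ?_⟩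
    · exact Finset.mem_offDiag.2 ⟨hx, hy, hxy⟩
    · simp
  · intro pr hpr
    obtain ⟨⟨a, b⟩, hp, rfl⟩ := Finset.mem_image.1 hpr
    apply isStable_of_bounds (lo := dist a b) (hi := dist a b) (by simp) (by simp) hε
    · simp
    · simp
    · nlinarith [dist_nonneg (x := a) (y := b)]
  · refine Finset.card_image_le.trans ?_
    rw [Finset.offDiag_card]
    omega

/-- The case `1 / n ≤ ε`: clusters around leaders, paired with annuli. -/
lemma cover_clusters {X : Type*} [MetricSpace X] (P : Finset X) {n : ℕ} {ε : ℝ}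
    (hP : P.card = n) (hn : 2 ≤ n) (hε : 0 < ε) (hε' : ε < 1 / 2) (hnε : 1 / (n : ℝ) ≤ ε) :
    ∃ W : Finset (Finset X × Finset X), PairDecomp P W ∧ (∀ pr ∈ W, IsStable ε pr.1 pr.2) ∧
      W.card ≤ n * (2 * ⌈1 + 32 * Real.log n / ε⌉₊ + 1) := by
  classical
  obtain ⟨R, hrefl, hsymm, htrans, hmono, hclose, hdiam, hmem⟩ := exists_linkage P
  have hn' : (2 : ℝ) ≤ n := by exact_mod_cast hn
  have hn0 : (0 : ℝ) < n := by linarith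
  set K : ℕ := ⌈1 + 32 * Real.log n / ε⌉₊ with hK
  set q : ℝ := 1 + ε / 4 with hqdef
  have hq1 : 1 < q := by linarith
  have hq0 : 0 < q := by linarith
  have hqp : ∀ i : ℤ, 0 < q ^ i := fun i => zpow_pos hq0 i
  let r : ℤ → ℝ := fun i => ε / 4 * q ^ i / n
  have hr0 : ∀ i, 0 ≤ r i := fun i => by
    have := hqp i
    positivity
  -- components at threshold `r i` have diameter at most `ε / 4 * q ^ i`
  have hRd : ∀ i x y, R (r i) x y → dist x y ≤ ε / 4 * q ^ i := by
    intro i x y h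
    have := hdiam _ x y (hr0 i) h
    rw [hP] at this
    have e : (n : ℝ) * r i = ε / 4 * q ^ i := by
      simp only [r]; field_simp
    linarith
  obtain ⟨f, hf⟩ : ∃ f : X → ℕ, Set.InjOn f P := by
    refine ⟨fun x => if h : x ∈ P then (P.equivFin ⟨x, h⟩ : ℕ) else 0, ?_⟩
    intro x hx y hy hxy
    have hx' : x ∈ P := hx
    have hy' : y ∈ P := hy
    simp only [hx', hy', dif_pos] at hxy
    simpa using P.equivFin.injective (Fin.ext hxy)
  -- `L t c`: the point `c` is the leader of its component at threshold `t`
  let L : ℝ → X → Prop := fun t c => ∀ z, R t c z → f c ≤ f z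
  have hlead : ∀ t, ∀ x ∈ P, ∃ c, R t x c ∧ L t c := by
    intro t x hx
    obtain ⟨c, hc, hmin⟩ := Finset.exists_min_image (P.filter (fun z => R t x z)) f
      ⟨x, Finset.mem_filter.2 ⟨hx, hrefl t x hx⟩⟩
    have hc' := (Finset.mem_filter.1 hc).2
    refine ⟨c, hc', fun z hz => hmin z (Finset.mem_filter.2 ⟨(hmem _ _ _ hz).2, ?_⟩)⟩
    exact htrans _ _ _ _ hc' hz
  let I : X → ℤ → Prop := fun c i => L (r i) c ∧ ¬ L (q ^ (i + 1)) c
  have hI : ∀ c i j, I c i → I c j → j - i ≤ (K : ℤ) := by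
    rintro c i j ⟨-, hi⟩ ⟨hj, -⟩
    apply scale_window hn hε hε' hnε
    by_contra! hc
    exact hi fun z hz => hj z (hmono _ _ _ _ hc hz)
  obtain ⟨i₀, hi₀⟩ : ∃ i₀ : X → ℤ, ∀ c i, I c i → i ∈ Finset.Icc (i₀ c - K) (i₀ c + K) := by
    have : ∀ c, ∃ i₀ : ℤ, ∀ i, I c i → i ∈ Finset.Icc (i₀ - K) (i₀ + K) := by
      intro c
      by_cases h : ∃ i, I c i
      · obtain ⟨i₀, h0⟩ := h
        refine ⟨i₀, fun i hi => ?_⟩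
        have h1 := hI c i i₀ hi h0
        have h2 := hI c i₀ i h0 hi
        rw [Finset.mem_Icc]
        constructor <;> linarith
      · exact ⟨0, fun i hi => (h ⟨i, hi⟩).elim⟩
    choose i₀ h using this
    exact ⟨i₀, h⟩
  let A : X → ℤ → Finset X := fun c i => P.filter (fun x => R (r i) c x)
  let B : X → ℤ → Finset X := fun c i =>
    P.filter (fun y => (1 - ε / 4) * q ^ i ≤ dist c y ∧ dist c y ≤ (q + ε / 4) * q ^ i)
  have hAB : ∀ c i, ∀ x ∈ A c i, ∀ y ∈ B c i,
      (1 - ε / 2) * q ^ i ≤ dist x y ∧ dist x y ≤ (q + ε / 2) * q ^ i := by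
    intro c i x hx y hy
    have h1 := hRd _ _ _ (Finset.mem_filter.1 hx).2
    obtain ⟨-, h2, h3⟩ := Finset.mem_filter.1 hy
    have h4 := dist_triangle c x y
    have h5 := dist_triangle_left x y c
    constructor <;> linarith
  let W : Finset (Finset X × Finset X) :=
    (P.biUnion fun c => (Finset.Icc (i₀ c - K) (i₀ c + K)).image fun i => (A c i, B c i)).filter
      fun pr => pr.2.Nonempty
  have hW : ∀ pr, pr ∈ W ↔
      (∃ c ∈ P, ∃ i ∈ Finset.Icc (i₀ c - K) (i₀ c + K), (A c i, B c i) = pr) ∧ pr.2.Nonempty := by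
    intro pr
    simp only [W, Finset.mem_filter, Finset.mem_biUnion, Finset.mem_image]
  have hcA : ∀ c ∈ P, ∀ i, c ∈ A c i := fun c hc i => Finset.mem_filter.2 ⟨hc, hrefl _ c hc⟩
  -- the covering property, when the leader of `y` is the one that gets absorbed
  have key : ∀ x ∈ P, ∀ y ∈ P, ∀ i : ℤ, q ^ i ≤ dist x y → dist x y < q ^ (i + 1) →
      ∀ a b, R (r i) x a → R (r i) y b → L (r i) b → f a < f b →
      ∃ pr ∈ W, y ∈ pr.1 ∧ x ∈ pr.2 := by
    intro x hx y hy i hi hi' a b ha hb hLb hab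
    have hbP := (hmem _ _ _ hb).2
    have hrq : r i ≤ q ^ (i + 1) := by
      have e : q ^ (i + 1) = q ^ i * q := zpow_add_one₀ hq0.ne' i
      have := hqp i
      have h1 : r i ≤ q ^ i := by
        simp only [r]
        rw [div_le_iff₀ hn0]
        nlinarith
      nlinarith
    have hIb : I b i := by
      refine ⟨hLb, fun h => ?_⟩
      have hba : R (q ^ (i + 1)) b a :=
        htrans _ _ _ _ (hmono _ _ _ _ hrq (hsymm _ _ _ hb)) <|
          htrans _ _ _ _ (hsymm _ _ _ (hclose _ x hx y hy hi'.le)) (hmono _ _ _ _ hrq ha)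
      exact absurd (h a hba) (not_le.2 hab)
    have hxB : x ∈ B b i := by
      have h1 := hRd _ _ _ hb
      have h2 := dist_triangle x b y
      have h3 := dist_triangle b y x
      rw [dist_comm b y, dist_comm y x] at h3
      rw [dist_comm x b, dist_comm b y] at h2
      have e : q ^ (i + 1) = q ^ i * q := zpow_add_one₀ hq0.ne' i
      refine Finset.mem_filter.2 ⟨hx, ?_, ?_⟩ <;> linarith
    refine ⟨(A b i, B b i), (hW _).2 ⟨⟨b, hbP, i, hi₀ b i hIb, rfl⟩, x, hxB⟩, ?_, hxB⟩
    exact Finset.mem_filter.2 ⟨hy, hsymm _ _ _ hb⟩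
  refine ⟨W, ⟨?_, ?_⟩, ?_, ?_⟩
  · intro pr hpr
    obtain ⟨⟨c, hc, i, -, rfl⟩, hne⟩ := (hW _).1 hpr
    refine ⟨Finset.filter_subset _ _, Finset.filter_subset _ _, ⟨c, hcA c hc i⟩, hne, ?_⟩
    rw [Finset.disjoint_left]
    intro x hx hx'
    have := (hAB c i x hx x hx').1
    rw [dist_self] at this
    have := hqp i
    nlinarith
  · intro x hx y hy hxy
    obtain ⟨i, hi, hi'⟩ := exists_mem_Ico_zpow (dist_pos.2 hxy) hq1
    obtain ⟨a, ha, hLa⟩ := hlead (r i) x hx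
    obtain ⟨b, hb, hLb⟩ := hlead (r i) y hy
    rcases lt_trichotomy (f a) (f b) with h | h | h
    · obtain ⟨pr, hpr, h⟩ := key x hx y hy i hi hi' a b ha hb hLb h
      exact ⟨pr, hpr, Or.inr ⟨h.2, h.1⟩⟩
    · exfalso
      have hab : a = b := hf (hmem _ _ _ ha).2 (hmem _ _ _ hb).2 h
      subst hab
      have := hRd _ _ _ (htrans _ _ _ _ ha (hsymm _ _ _ hb))
      have := hqp i
      nlinarith
    · rw [dist_comm] at hi hi'
      obtain ⟨pr, hpr, h⟩ := key y hy x hx i hi hi' b a hb ha hLa h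
      exact ⟨pr, hpr, Or.inl ⟨h.1, h.2⟩⟩
  · intro pr hpr
    obtain ⟨⟨c, hc, i, -, rfl⟩, hne⟩ := (hW _).1 hpr
    refine isStable_of_bounds ⟨c, hcA c hc i⟩ hne hε (fun x hx y hy => (hAB c i x hx y hy).1)
      (fun x hx y hy => (hAB c i x hx y hy).2) ?_
    rw [← mul_assoc]
    apply mul_le_mul_of_nonneg_right _ (hqp i).le
    nlinarith
  · refine (Finset.card_filter_le _ _).trans ?_
    rw [← hP]
    apply Finset.card_biUnion_le_card_mul
    intro c _
    refine Finset.card_image_le.trans ?_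
    rw [Int.card_Icc]
    omega

theorem stmt0 :
    ∃ c : ℝ, 0 < c ∧
      ∀ (X : Type*) [MetricSpace X] (P : Finset X) (n : ℕ) (ε : ℝ),
        P.card = n → 2 ≤ n → 0 < ε → ε < 1 / 2 →
        ∃ W : Finset (Finset X × Finset X),
          PairDecomp P W ∧
          (∀ pr ∈ W, IsStable ε pr.1 pr.2) ∧
          (W.card : ℝ) ≤ c * ((n : ℝ) / ε) * Real.log n := by
  refine ⟨100, by norm_num, ?_⟩
  intro X _ P n ε hP hn hε hε'
  have hn' : (2 : ℝ) ≤ n := by exact_mod_cast hn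
  have hn0 : (0 : ℝ) < n := by linarith
  have hl := log_nat_ge hn
  rcases le_or_gt (1 / (n : ℝ)) ε with hnε | hnε
  · obtain ⟨W, h1, h2, h3⟩ := cover_clusters P hP hn hε hε' hnε
    refine ⟨W, h1, h2, ?_⟩
    have h4 : (W.card : ℝ) ≤ n * (2 * (⌈1 + 32 * Real.log n / ε⌉₊ : ℝ) + 1) := by exact_mod_cast h3
    have h5 := (Nat.ceil_lt_add_one (a := 1 + 32 * Real.log n / ε) (by positivity)).le
    have h6 : 1 ≤ Real.log n / ε := by
      rw [le_div_iff₀ hε]; linarith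
    have e : 32 * Real.log n / ε = 32 * (Real.log n / ε) := by ring
    rw [e] at h4 h5
    calc (W.card : ℝ) ≤ _ := h4
      _ ≤ n * (100 * (Real.log n / ε)) := by
        gcongr
        linarith
      _ = _ := by ring
  · obtain ⟨W, h1, h2, h3⟩ := cover_singletons P hε
    refine ⟨W, h1, h2, ?_⟩
    have h4 : (W.card : ℝ) ≤ n * n := by rw [hP] at h3; exact_mod_cast h3
    have h5 : (n : ℝ) ≤ 1 / ε := by
      rw [le_div_iff₀ hε]
      rw [lt_div_iff₀ hn0] at hnε
      linarith
    calc (W.card : ℝ) ≤ _ := h4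
      _ ≤ n * (1 / ε) := by gcongr
      _ = n / ε * 1 := by ring
      _ ≤ n / ε * (100 * Real.log n) := by
        gcongr
        linarith
      _ = _ := by ring
end

section
/- There is an absolute constant c > 0 with the following property. Let (X, dist) be a metric space, let P ⊆ X be a finite subset with |P| = n ≥ 2 and spread Φ(P) = diam(P)/cp(P), and let ε ∈ (0, 1/2). Then there exists a pair decomposition of P with at most c · (n/ε) · (1 + log Φ(P)) pairs such that every pair is both ε-stable and (1/ε)-semi-separated. -/
/-- The diameter of a nonempty finite set. -/
noncomputable def fdiam {X : Type*} [MetricSpace X] (A : Finset X) : ℝ :=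
  sSup {r : ℝ | ∃ x ∈ A, ∃ y ∈ A, r = dist x y}

/-- The closest-pair distance of a finite set with at least two points. -/
noncomputable def closestPair {X : Type*} [MetricSpace X] (P : Finset X) : ℝ :=
  sInf {r : ℝ | ∃ x ∈ P, ∃ y ∈ P, x ≠ y ∧ r = dist x y}

/-- A pair `{A, B}` is `(1/ε)`-semi-separated if `min(diam A, diam B) ≤ ε·d(A,B)`. -/
def IsSemiSeparated {X : Type*} [MetricSpace X] (ε : ℝ) (A B : Finset X) : Prop :=
  min (fdiam A) (fdiam B) ≤ ε * dmin A B

theorem finite_dist_set {X : Type*} [MetricSpace X] (A B : Finset X) :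
    {r : ℝ | ∃ a ∈ A, ∃ b ∈ B, r = dist a b}.Finite := by
  refine ((A ×ˢ B).finite_toSet.image fun p => dist p.1 p.2).subset ?_
  rintro r ⟨a, ha, b, hb, rfl⟩
  exact ⟨(a, b), by simp [ha, hb], rfl⟩

theorem dist_le_fdiam {X : Type*} [MetricSpace X] {P : Finset X} {x y : X}
    (hx : x ∈ P) (hy : y ∈ P) : dist x y ≤ fdiam P :=
  le_csSup (finite_dist_set P P).bddAbove ⟨x, hx, y, hy, rfl⟩

theorem closestPair_le_dist {X : Type*} [MetricSpace X] {P : Finset X} {x y : X}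
    (hx : x ∈ P) (hy : y ∈ P) (hxy : x ≠ y) : closestPair P ≤ dist x y := by
  refine csInf_le ⟨0, ?_⟩ ⟨x, hx, y, hy, hxy, rfl⟩
  rintro r ⟨a, _, b, _, _, rfl⟩
  exact dist_nonneg

theorem closestPair_pos {X : Type*} [MetricSpace X] {P : Finset X} (hP : 1 < P.card) :
    0 < closestPair P := by
  obtain ⟨x, hx, y, hy, hxy⟩ := Finset.one_lt_card.1 hP
  have hfin : {r : ℝ | ∃ x ∈ P, ∃ y ∈ P, x ≠ y ∧ r = dist x y}.Finite := by
    refine (finite_dist_set P P).subset ?_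
    rintro r ⟨a, ha, b, hb, _, h⟩
    exact ⟨a, ha, b, hb, h⟩
  -- The infimum of a finite nonempty set is attained.
  have hne : {r : ℝ | ∃ x ∈ P, ∃ y ∈ P, x ≠ y ∧ r = dist x y}.Nonempty :=
    ⟨_, x, hx, y, hy, hxy, rfl⟩
  obtain ⟨a, _, b, _, hab, h⟩ := hne.csInf_mem hfin
  unfold closestPair
  rw [h]
  exact dist_pos.2 hab

theorem isStable_of_forall {X : Type*} [MetricSpace X] {ε : ℝ} {A B : Finset X}
    (hA : A.Nonempty) (hB : B.Nonempty)
    (h : ∀ a ∈ A, ∀ b ∈ B, ∀ a' ∈ A, ∀ b' ∈ B, dist a b ≤ (1 + 2 * ε) * dist a' b') :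
    IsStable ε A B := by
  obtain ⟨a₀, ha₀⟩ := hA
  obtain ⟨b₀, hb₀⟩ := hB
  have hne : {r : ℝ | ∃ a ∈ A, ∃ b ∈ B, r = dist a b}.Nonempty := ⟨_, a₀, ha₀, b₀, hb₀, rfl⟩
  obtain ⟨a', ha', b', hb', hmin⟩ := hne.csInf_mem (finite_dist_set A B)
  unfold IsStable dmax dmin
  rw [hmin]
  refine csSup_le hne ?_
  rintro r ⟨a, ha, b, hb, rfl⟩
  exact h a ha b hb a' ha' b' hb'

theorem isSemiSeparated_singleton {X : Type*} [MetricSpace X] {ε : ℝ} (hε : 0 ≤ ε) (p : X)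
    (B : Finset X) : IsSemiSeparated ε {p} B := by
  have h0 : fdiam ({p} : Finset X) = 0 := by simp [fdiam]
  have hd : 0 ≤ dmin {p} B := by
    refine Real.sInf_nonneg ?_
    rintro r ⟨a, _, b, _, rfl⟩
    exact dist_nonneg
  exact (min_le_left _ _).trans (h0.trans_le (mul_nonneg hε hd))

/-- The index of the annulus containing a point at distance `d`, when the smallest radius is `m` and
consecutive radii have ratio `1 + 2ε`. The floor takes values in `ℕ`, which loses nothing for
`d ≥ m`. -/
noncomputable def level (ε m d : ℝ) : ℕ :=
  ⌊Real.log (d / m) / Real.log (1 + 2 * ε)⌋₊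

theorem level_eq_le {ε m d d' : ℝ} (hε : 0 < ε) (hm : 0 < m) (hd : m ≤ d) (hd' : m ≤ d')
    (h : level ε m d = level ε m d') : d ≤ (1 + 2 * ε) * d' := by
  have hL : 0 < Real.log (1 + 2 * ε) := Real.log_pos (by linarith)
  have h1 := Nat.lt_floor_add_one (Real.log (d / m) / Real.log (1 + 2 * ε))
  have h2 := Nat.floor_le (a := Real.log (d' / m) / Real.log (1 + 2 * ε))
    (div_nonneg (Real.log_nonneg ((one_le_div hm).2 hd')) hL.le)
  unfold level at h
  rw [← h] at h2
  have h3 : Real.log (d / m) / Real.log (1 + 2 * ε)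
      < Real.log (d' / m) / Real.log (1 + 2 * ε) + 1 := by linarith
  rw [div_add_one hL.ne', div_lt_div_iff_of_pos_right hL,
    Real.log_div (by linarith) hm.ne', Real.log_div (by linarith) hm.ne'] at h3
  have hd0 : 0 < d' := by linarith
  refine (Real.log_le_log_iff (by linarith) (by positivity)).1 ?_
  rw [Real.log_mul (by positivity) hd0.ne']
  linarith

theorem level_mono {ε m d d' : ℝ} (hε : 0 < ε) (hm : 0 < m) (hd : 0 < d) (h : d ≤ d') :
    level ε m d ≤ level ε m d' := by
  have hL : 0 < Real.log (1 + 2 * ε) := Real.log_pos (by linarith)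
  unfold level
  gcongr

theorem le_log_one_add {ε : ℝ} (hε : 0 < ε) (hε' : ε < 1 / 2) : ε ≤ Real.log (1 + 2 * ε) := by
  refine le_trans ?_ (Real.one_sub_inv_le_log_of_pos (by linarith))
  have : (1 + 2 * ε)⁻¹ ≤ 1 - ε := by
    rw [inv_le_iff_one_le_mul₀ (by linarith)]
    nlinarith
  linarith

theorem stmt2 :
    ∃ c : ℝ, 0 < c ∧
      ∀ (X : Type*) [MetricSpace X] (P : Finset X) (n : ℕ) (ε : ℝ),
        P.card = n → 2 ≤ n → 0 < ε → ε < 1 / 2 →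
        ∃ W : Finset (Finset X × Finset X),
          PairDecomp P W ∧
          (∀ pr ∈ W, IsStable ε pr.1 pr.2 ∧ IsSemiSeparated ε pr.1 pr.2) ∧
          (W.card : ℝ) ≤
            c * ((n : ℝ) / ε) * (1 + Real.log (fdiam P / closestPair P)) := by
  classical
  refine ⟨1, one_pos, ?_⟩
  intro X _ P n ε hn h2 hε hε'
  subst hn
  set m := closestPair P with hm
  have hmpos : 0 < m := closestPair_pos h2
  set N := level ε m (fdiam P) with hN
  let B : X → ℕ → Finset X := fun p i => P.filter fun q => p ≠ q ∧ level ε m (dist p q) = i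
  let W : Finset (Finset X × Finset X) :=
    ((P ×ˢ Finset.range (N + 1)).image fun t => (({t.1} : Finset X), B t.1 t.2)).filter
      fun pr => pr.2.Nonempty
  have hW : ∀ pr ∈ W, ∃ p ∈ P, ∃ i, pr = ({p}, B p i) ∧ (B p i).Nonempty := by
    intro pr hpr
    obtain ⟨h1, hne⟩ := Finset.mem_filter.1 hpr
    obtain ⟨⟨p, i⟩, ht, rfl⟩ := Finset.mem_image.1 h1
    exact ⟨p, (Finset.mem_product.1 ht).1, i, rfl, hne⟩
  refine ⟨W, ⟨?_, ?_⟩, ?_, ?_⟩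
  · intro pr hpr
    obtain ⟨p, hp, i, rfl, hne⟩ := hW pr hpr
    refine ⟨by simpa using hp, Finset.filter_subset _ _, by simp, hne, ?_⟩
    simp [B]
  · intro x hx y hy hxy
    have hyB : y ∈ B x (level ε m (dist x y)) := by simp [B, hy, hxy]
    refine ⟨({x}, B x (level ε m (dist x y))), ?_, Or.inl ⟨by simp, hyB⟩⟩
    refine Finset.mem_filter.2 ⟨Finset.mem_image.2 ⟨(x, level ε m (dist x y)), ?_, rfl⟩, ⟨y, hyB⟩⟩
    have := level_mono hε hmpos (dist_pos.2 hxy) (dist_le_fdiam hx hy)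
    simp only [Finset.mem_product, Finset.mem_range]
    exact ⟨hx, by omega⟩
  · intro pr hpr
    obtain ⟨p, hp, i, rfl, hne⟩ := hW pr hpr
    refine ⟨isStable_of_forall (by simp) hne ?_, isSemiSeparated_singleton hε.le _ _⟩
    intro a ha b hb a' ha' b' hb'
    obtain rfl := Finset.mem_singleton.1 ha
    obtain rfl := Finset.mem_singleton.1 ha'
    obtain ⟨hbP, hab, hlev⟩ := Finset.mem_filter.1 hb
    obtain ⟨hbP', hab', hlev'⟩ := Finset.mem_filter.1 hb'
    exact level_eq_le hε hmpos (closestPair_le_dist hp hbP hab)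
      (closestPair_le_dist hp hbP' hab') (hlev.trans hlev'.symm)
  · have hcard : W.card ≤ P.card * (N + 1) := by
      refine (Finset.card_filter_le _ _).trans (Finset.card_image_le.trans ?_)
      simp
    have hΦ : 0 ≤ Real.log (fdiam P / m) := by
      obtain ⟨x, hx, y, hy, hxy⟩ := Finset.one_lt_card.1 h2
      exact Real.log_nonneg ((one_le_div hmpos).2
        ((closestPair_le_dist hx hy hxy).trans (dist_le_fdiam hx hy)))
    have hL := le_log_one_add hε hε'
    have hNle : (N : ℝ) ≤ Real.log (fdiam P / m) / ε :=
      (Nat.floor_le (div_nonneg hΦ (hε.le.trans hL))).trans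
        (div_le_div_of_nonneg_left hΦ hε hL)
    have h1ε : 1 ≤ 1 / ε := (one_le_div hε).2 (by linarith)
    calc (W.card : ℝ) ≤ P.card * (N + 1) := by exact_mod_cast hcard
      _ ≤ P.card * (Real.log (fdiam P / m) / ε + 1 / ε) := by gcongr
      _ = 1 * ((P.card : ℝ) / ε) * (1 + Real.log (fdiam P / m)) := by ring
end

section
/- There is an absolute constant c > 0 with the following property. For every integer d ≥ 1, every finite set P ⊆ ℝ^d (Euclidean space with the Euclidean metric) with |P| = n ≥ 2, and every ε ∈ (0,1), there exists a pair decomposition of P with at most c · d³ · (n/ε) · log(2 + d/ε) pairs such that every pair is both ε-stable and (1/ε)-semi-separated. -/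
/-! ### Distances between finite sets -/

lemma le_dmin {X : Type*} [MetricSpace X] {A B : Finset X} (hA : A.Nonempty) (hB : B.Nonempty)
    {m : ℝ} (h : ∀ a ∈ A, ∀ b ∈ B, m ≤ dist a b) : m ≤ dmin A B := by
  obtain ⟨a, ha⟩ := hA
  obtain ⟨b, hb⟩ := hB
  refine le_csInf ⟨_, a, ha, b, hb, rfl⟩ ?_
  rintro _ ⟨a, ha, b, hb, rfl⟩
  exact h a ha b hb

lemma dmax_le {X : Type*} [MetricSpace X] {A B : Finset X} (hA : A.Nonempty) (hB : B.Nonempty)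
    {m : ℝ} (h : ∀ a ∈ A, ∀ b ∈ B, dist a b ≤ m) : dmax A B ≤ m := by
  obtain ⟨a, ha⟩ := hA
  obtain ⟨b, hb⟩ := hB
  refine csSup_le ⟨_, a, ha, b, hb, rfl⟩ ?_
  rintro _ ⟨a, ha, b, hb, rfl⟩
  exact h a ha b hb

lemma fdiam_le {X : Type*} [MetricSpace X] {A : Finset X} (hA : A.Nonempty)
    {m : ℝ} (h : ∀ a ∈ A, ∀ b ∈ A, dist a b ≤ m) : fdiam A ≤ m := by
  obtain ⟨a, ha⟩ := hA
  refine csSup_le ⟨_, a, ha, a, ha, rfl⟩ ?_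
  rintro _ ⟨a, ha, b, hb, rfl⟩
  exact h a ha b hb

/-- A cluster `A` and a set `B` inside a thin ring around a point of `A` form a good pair, provided
`A` is small compared with the distance of at least one pair of points of `A × B`. -/
lemma ring_pair {X : Type*} [MetricSpace X] {A B : Finset X} {ε ρ : ℝ} (hε : 0 < ε) (hε1 : ε < 1)
    (hρ : 0 < ρ) {z p q : X} (hz : z ∈ A) (hp : p ∈ A) (hq : q ∈ B)
    (hA : ∀ a ∈ A, ∀ b ∈ A, dist a b ≤ ε / 8 * dist p q)
    (hB : ∀ b ∈ B, ρ ≤ dist z b ∧ dist z b ≤ ρ * (1 + ε / 8)) :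
    Disjoint A B ∧ IsStable ε A B ∧ IsSemiSeparated ε A B := by
  have hpq : dist p q ≤ 9 / 7 * ρ := by
    have h1 := dist_triangle p z q
    have h2 := hA p hp z hz
    have h3 := (hB q hq).2
    nlinarith [mul_nonneg (sub_nonneg.2 hε1.le) (dist_nonneg (x := p) (y := q)),
      mul_nonneg (sub_nonneg.2 hε1.le) hρ.le]
  have hA' : ∀ a ∈ A, ∀ b ∈ A, dist a b ≤ ε * ρ * (9 / 56) := fun a ha b hb => by
    have := hA a ha b hb
    nlinarith
  have hερ : ε * ρ ≤ ρ := by nlinarith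
  have hερ0 : 0 < ε * ρ := by positivity
  have hlow : ∀ a ∈ A, ∀ b ∈ B, ρ - ε * ρ * (9 / 56) ≤ dist a b := fun a ha b hb => by
    have h1 := dist_triangle z a b
    have h2 := hA' z hz a ha
    have h3 := (hB b hb).1
    linarith
  have hupp : ∀ a ∈ A, ∀ b ∈ B, dist a b ≤ ρ * (1 + ε / 8) + ε * ρ * (9 / 56) :=
    fun a ha b hb => by
    have h1 := dist_triangle a z b
    have h2 := hA' a ha z hz
    have h3 := (hB b hb).2
    linarith
  have h1 := le_dmin ⟨p, hp⟩ ⟨q, hq⟩ hlow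
  have h2 := dmax_le ⟨p, hp⟩ ⟨q, hq⟩ hupp
  have h3 := fdiam_le ⟨p, hp⟩ hA'
  refine ⟨?_, ?_, ?_⟩
  · rw [Finset.disjoint_left]
    intro a ha hb
    have := hlow a ha a hb
    rw [dist_self] at this
    linarith
  · unfold IsStable
    nlinarith [mul_le_mul_of_nonneg_left h1 hε.le]
  · unfold IsSemiSeparated
    refine (min_le_left _ _).trans ?_
    nlinarith [mul_le_mul_of_nonneg_left h1 hε.le]

/-! ### From clusters to a pair decomposition -/

/-- Suppose that for all `p ≠ q` some family contains a cluster `A ∋ p` that is small compared with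
`dist p q` and whose distances to `q` lie in a range `[r A, r A * (1 + ε / 8) ^ N)` depending on `A`
only.  Then pairing every cluster with the `N` rings around it yields a decomposition. -/
lemma decomp_of_clusters {X : Type*} [MetricSpace X] [Nonempty X] (P : Finset X) {ε : ℝ}
    (hε : 0 < ε) (hε1 : ε < 1) (D N M : ℕ) (F : Fin D → Finset (Finset X))
    (hF : ∀ i, (F i).card ≤ M) (r : Fin D → Finset X → ℝ) (hr : ∀ i A, 0 < r i A)
    (h : ∀ p ∈ P, ∀ q ∈ P, p ≠ q → ∃ i, ∃ A ∈ F i, A ⊆ P ∧ p ∈ A ∧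
      (∀ a ∈ A, ∀ b ∈ A, dist a b ≤ ε / 8 * dist p q) ∧
      ∀ a ∈ A, r i A ≤ dist a q ∧ dist a q < r i A * (1 + ε / 8) ^ N) :
    ∃ W : Finset (Finset X × Finset X), PairDecomp P W ∧
      (∀ pr ∈ W, IsStable ε pr.1 pr.2 ∧ IsSemiSeparated ε pr.1 pr.2) ∧
      W.card ≤ D * (M * N) := by
  classical
  have hrep : ∀ A : Finset X, ∃ z : X, A.Nonempty → z ∈ A := fun A => by
    by_cases hA : A.Nonempty
    · exact ⟨hA.choose, fun _ => hA.choose_spec⟩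
    · exact ⟨Classical.arbitrary X, fun h => absurd h hA⟩
  choose rep hrep using hrep
  let ρ : (Σ _ : Fin D, Finset X × ℕ) → ℝ := fun c => r c.1 c.2.1 * (1 + ε / 8) ^ c.2.2
  let g : (Σ _ : Fin D, Finset X × ℕ) → Finset X × Finset X := fun c =>
    (c.2.1, P.filter fun q => ρ c ≤ dist (rep c.2.1) q ∧ dist (rep c.2.1) q ≤ ρ c * (1 + ε / 8))
  let S : Finset (Σ _ : Fin D, Finset X × ℕ) :=
    Finset.univ.sigma fun i => F i ×ˢ Finset.range N
  let T := S.filter fun c => c.2.1 ⊆ P ∧ ∃ p ∈ c.2.1, ∃ q ∈ (g c).2,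
    ∀ a ∈ c.2.1, ∀ b ∈ c.2.1, dist a b ≤ ε / 8 * dist p q
  have hρ : ∀ c, 0 < ρ c := fun c => mul_pos (hr _ _) (by positivity)
  have key : ∀ c ∈ T, Disjoint (g c).1 (g c).2 ∧ IsStable ε (g c).1 (g c).2 ∧
      IsSemiSeparated ε (g c).1 (g c).2 := by
    intro c hc
    obtain ⟨-, -, p, hp, q, hq, hA⟩ := Finset.mem_filter.1 hc
    exact ring_pair hε hε1 (hρ c) (hrep _ ⟨p, hp⟩) hp hq hA
      fun b hb => (Finset.mem_filter.1 hb).2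
  refine ⟨T.image g, ⟨?_, ?_⟩, ?_, ?_⟩
  · intro pr hpr
    obtain ⟨c, hc, rfl⟩ := Finset.mem_image.1 hpr
    obtain ⟨-, hsub, p, hp, q, hq, -⟩ := Finset.mem_filter.1 hc
    exact ⟨hsub, Finset.filter_subset _ _, ⟨p, hp⟩, ⟨q, hq⟩, (key c hc).1⟩
  · intro p hp q hq hpq
    obtain ⟨i, A, hAF, hAP, hpA, hdiam, hrange⟩ := h p hp q hq hpq
    obtain ⟨h1, h2⟩ := hrange (rep A) (hrep A ⟨p, hpA⟩)
    have hrA := hr i A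
    have hbase : (1 : ℝ) < 1 + ε / 8 := by linarith
    obtain ⟨t, ht1, ht2⟩ := exists_nat_pow_near ((one_le_div hrA).2 h1) hbase
    have htN : t < N := by
      refine (pow_lt_pow_iff_right₀ hbase).1 (ht1.trans_lt ?_)
      rwa [div_lt_iff₀' hrA]
    rw [le_div_iff₀' hrA] at ht1
    rw [div_lt_iff₀' hrA, pow_succ, ← mul_assoc] at ht2
    have hqB : q ∈ (g ⟨i, A, t⟩).2 := Finset.mem_filter.2 ⟨hq, ht1, ht2.le⟩
    refine ⟨g ⟨i, A, t⟩, Finset.mem_image_of_mem _ (Finset.mem_filter.2 ⟨?_, hAP, p, hpA, q, hqB,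
      hdiam⟩), Or.inl ⟨hpA, hqB⟩⟩
    simp [S, hAF, htN]
  · intro pr hpr
    obtain ⟨c, hc, rfl⟩ := Finset.mem_image.1 hpr
    exact (key c hc).2
  · refine Finset.card_image_le.trans ((Finset.card_filter_le _ _).trans ?_)
    rw [Finset.card_sigma]
    calc ∑ i : Fin D, (F i ×ˢ Finset.range N).card ≤ ∑ _i : Fin D, M * N := by
          refine Finset.sum_le_sum fun i _ => ?_
          rw [Finset.card_product, Finset.card_range]
          exact Nat.mul_le_mul_right _ (hF i)
      _ = D * (M * N) := by simp

/-! ### Laminar families -/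

/-- A laminar family of nonempty subsets of an `n`-set has at most `2 n` members.  Deleting a point
`x` from the ground set merges at most one pair `B`, `B ∪ {x}` of members and
destroys at most the member `{x}`. -/
lemma laminar_card_le {X : Type*} [DecidableEq X] (P : Finset X) :
    ∀ F : Finset (Finset X), (∀ A ∈ F, A ⊆ P ∧ A.Nonempty) →
      (∀ A ∈ F, ∀ B ∈ F, A ⊆ B ∨ B ⊆ A ∨ Disjoint A B) → F.card ≤ 2 * P.card := by
  induction P using Finset.induction_on with
  | empty =>
    intro F hF _
    have : F = ∅ := by
      refine Finset.eq_empty_of_forall_notMem fun A hA => ?_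
      obtain ⟨h1, h2⟩ := hF A hA
      exact h2.ne_empty (Finset.subset_empty.1 h1)
    simp [this]
  | insert x P hx ih =>
    intro F hF hlam
    let G := (F.image fun A => A.erase x).erase ∅
    have hG := ih G (by
      intro A hA
      obtain ⟨hne, hA⟩ := Finset.mem_erase.1 hA
      obtain ⟨B, hB, rfl⟩ := Finset.mem_image.1 hA
      refine ⟨fun y hy => ?_, Finset.nonempty_iff_ne_empty.2 hne⟩
      obtain ⟨h1, h2⟩ := Finset.mem_erase.1 hy
      exact (Finset.mem_insert.1 ((hF B hB).1 h2)).resolve_left h1) (by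
      intro A hA A' hA'
      obtain ⟨-, hA⟩ := Finset.mem_erase.1 hA
      obtain ⟨-, hA'⟩ := Finset.mem_erase.1 hA'
      obtain ⟨B, hB, rfl⟩ := Finset.mem_image.1 hA
      obtain ⟨B', hB', rfl⟩ := Finset.mem_image.1 hA'
      rcases hlam B hB B' hB' with h | h | h
      · exact Or.inl (Finset.erase_subset_erase _ h)
      · exact Or.inr (Or.inl (Finset.erase_subset_erase _ h))
      · exact Or.inr (Or.inr (h.mono (Finset.erase_subset _ _) (Finset.erase_subset _ _))))
    -- `H` collects the members `B ∪ {x}` of `F` for which `B` is a member as well.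
    let H := F.filter fun A => x ∈ A ∧ A.erase x ∈ F
    have hH : H.card ≤ 1 := by
      rw [Finset.card_le_one]
      have aux : ∀ A ∈ H, ∀ B ∈ H, A ⊆ B → A = B := by
        intro A hA B hB hAB
        obtain ⟨hA, hxA, hA'⟩ := Finset.mem_filter.1 hA
        obtain ⟨hB, hxB, hB'⟩ := Finset.mem_filter.1 hB
        refine hAB.antisymm ?_
        rcases hlam A hA _ hB' with h | h | h
        · exact absurd (h hxA) (Finset.notMem_erase x B)
        · intro y hy
          by_cases hyx : y = x
          · exact hyx ▸ hxA
          · exact h (Finset.mem_erase.2 ⟨hyx, hy⟩)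
        · obtain ⟨y, hy⟩ := (hF _ hA').2
          obtain ⟨hyx, hyA⟩ := Finset.mem_erase.1 hy
          exact absurd (Finset.mem_erase.2 ⟨hyx, hAB hyA⟩) (Finset.disjoint_left.1 h hyA)
      intro A hA B hB
      have hxA := (Finset.mem_filter.1 hA).2.1
      have hxB := (Finset.mem_filter.1 hB).2.1
      rcases hlam A (Finset.mem_filter.1 hA).1 B (Finset.mem_filter.1 hB).1 with h | h | h
      · exact aux A hA B hB h
      · exact (aux B hB A hA h).symm
      · exact absurd hxB (Finset.disjoint_left.1 h hxA)
    have hsub : ((F \ H).erase {x}).card ≤ G.card := by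
      refine Finset.card_le_card_of_injOn (fun A => A.erase x) ?_ ?_
      · intro A hA
        obtain ⟨hAx, hA⟩ := Finset.mem_erase.1 hA
        have hAF := (Finset.mem_sdiff.1 hA).1
        refine Finset.mem_erase.2 ⟨fun h0 => ?_, Finset.mem_image_of_mem _ hAF⟩
        rcases (Finset.erase_eq_empty_iff _ _).1 h0 with h0 | h0
        · exact (hF A hAF).2.ne_empty h0
        · exact hAx h0
      · intro A hA B hB hAB
        obtain ⟨-, hA⟩ := Finset.mem_erase.1 hA
        obtain ⟨-, hB⟩ := Finset.mem_erase.1 hB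
        obtain ⟨hA, hA'⟩ := Finset.mem_sdiff.1 hA
        obtain ⟨hB, hB'⟩ := Finset.mem_sdiff.1 hB
        have hAB : A.erase x = B.erase x := hAB
        by_cases hxA : x ∈ A <;> by_cases hxB : x ∈ B
        · rw [← Finset.insert_erase hxA, hAB, Finset.insert_erase hxB]
        · rw [Finset.erase_eq_of_notMem hxB] at hAB
          exact absurd (Finset.mem_filter.2 ⟨hA, hxA, hAB ▸ hB⟩) hA'
        · rw [Finset.erase_eq_of_notMem hxA] at hAB
          exact absurd (Finset.mem_filter.2 ⟨hB, hxB, hAB ▸ hA⟩) hB'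
        · rwa [Finset.erase_eq_of_notMem hxA, Finset.erase_eq_of_notMem hxB] at hAB
    have h1 : (F \ H).card ≤ ((F \ H).erase {x}).card + 1 := by
      have := Finset.pred_card_le_card_erase (s := F \ H) (a := {x})
      omega
    have h2 : F.card ≤ (F \ H).card + H.card := by
      have := Finset.le_card_sdiff H F
      omega
    rw [Finset.card_insert_of_notMem hx]
    omega

/-! ### Shifted grids -/

/-- The cell containing `x` in the depth-`k` grid of side `S / (d + 2) ^ k`, shifted by
`i / (d + 1)` of the side `S` of the top grid in every coordinate. -/
noncomputable def cell {d : ℕ} (S : ℝ) (i : ℕ) (k : ℕ) (x : EuclideanSpace ℝ (Fin d)) :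
    Fin d → ℤ :=
  fun j => ⌊(x j / S + i / (d + 1 : ℝ)) * ((d + 2 : ℕ) : ℝ) ^ k⌋

lemma cell_mono {d : ℕ} {S : ℝ} {i k l : ℕ} (hkl : k ≤ l) {x y : EuclideanSpace ℝ (Fin d)}
    (h : cell S i l x = cell S i l y) : cell S i k x = cell S i k y := by
  induction l, hkl using Nat.le_induction with
  | base => exact h
  | succ l _ ih =>
    refine ih (funext fun j => ?_)
    have hj := congrFun h j
    have hb : ((d + 2 : ℕ) : ℝ) ≠ 0 := by positivity
    have step : ∀ z : ℝ, ⌊z * ((d + 2 : ℕ) : ℝ) ^ l⌋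
        = ⌊z * ((d + 2 : ℕ) : ℝ) ^ (l + 1)⌋ / ((d + 2 : ℕ) : ℤ) := by
      intro z
      rw [← Int.floor_div_natCast, pow_succ, ← mul_assoc, mul_div_cancel_right₀ _ hb]
    simp only [cell] at hj ⊢
    rw [step, step, hj]

lemma dist_le_of_cell_eq {d : ℕ} {S : ℝ} (hS : 0 < S) {i k : ℕ} {x y : EuclideanSpace ℝ (Fin d)}
    (h : cell S i k x = cell S i k y) : dist x y ≤ d * (S / ((d + 2 : ℕ) : ℝ) ^ k) := by
  have hb : (0 : ℝ) < ((d + 2 : ℕ) : ℝ) ^ k := by positivity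
  set s := S / ((d + 2 : ℕ) : ℝ) ^ k with hs
  have hs0 : 0 < s := by positivity
  have hj : ∀ j, dist (x j) (y j) ≤ s := by
    intro j
    have := Int.abs_sub_lt_one_of_floor_eq_floor (congrFun h j)
    rw [← sub_mul, add_sub_add_right_eq_sub, ← sub_div, abs_mul, abs_div, abs_of_pos hb,
      abs_of_pos hS, div_mul_eq_mul_div, div_lt_one hS] at this
    rw [Real.dist_eq, hs, le_div_iff₀ hb]
    exact this.le
  rw [EuclideanSpace.dist_eq]
  refine Real.sqrt_le_iff.2 ⟨by positivity, ?_⟩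
  calc ∑ j, dist (x j) (y j) ^ 2 ≤ ∑ _j : Fin d, s ^ 2 :=
        Finset.sum_le_sum fun j _ => pow_le_pow_left₀ dist_nonneg (hj j) 2
    _ = d * s ^ 2 := by simp
    _ ≤ (d * s) ^ 2 := by
        rcases Nat.eq_zero_or_pos d with rfl | hd
        · simp
        · have : (1 : ℝ) ≤ d := by exact_mod_cast hd
          nlinarith [sq_nonneg s, mul_nonneg (sub_nonneg.2 this) (sq_nonneg s)]

/-- Two reals at distance at most `1 / D` are separated by the integer grid for at most
one of the shifts `i / D`, `i < D`. -/
lemma shift_unique {D : ℕ} (hD : 0 < D) {u v : ℝ} (huv : u ≤ v) (hd : (v - u) * D ≤ 1)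
    {i i' : ℕ} (hi : i < D) (hi' : i' < D)
    (h : ⌊u + i / (D : ℝ)⌋ ≠ ⌊v + i / (D : ℝ)⌋) (h' : ⌊u + i' / (D : ℝ)⌋ ≠ ⌊v + i' / (D : ℝ)⌋) :
    i = i' := by
  have hD' : (0 : ℝ) < D := by exact_mod_cast hD
  -- A separating integer `m`, with the shift undone and denominators cleared.
  have aux : ∀ l : ℕ, ⌊u + l / (D : ℝ)⌋ ≠ ⌊v + l / (D : ℝ)⌋ →
      ∃ m : ℤ, u * D < m * D - l ∧ m * D - l ≤ v * D := by
    intro l hl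
    have hlt : ⌊u + l / (D : ℝ)⌋ < ⌊v + l / (D : ℝ)⌋ :=
      lt_of_le_of_ne (Int.floor_le_floor (by linarith)) hl
    refine ⟨⌊v + l / (D : ℝ)⌋, ?_, ?_⟩
    · have := mul_lt_mul_of_pos_right (Int.floor_lt.1 hlt) hD'
      rw [add_mul, div_mul_cancel₀ _ hD'.ne'] at this
      linarith
    · have := mul_le_mul_of_nonneg_right (Int.floor_le (v + l / (D : ℝ))) hD'.le
      rw [add_mul, div_mul_cancel₀ _ hD'.ne'] at this
      linarith
  obtain ⟨m, hm1, hm2⟩ := aux i h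
  obtain ⟨m', hm1', hm2'⟩ := aux i' h'
  have e1 : (m * D - i : ℤ) < (m' * D - i') + 1 := by
    have : (m * D - i : ℝ) < (m' * D - i') + 1 := by linarith
    exact_mod_cast this
  have e2 : (m' * D - i' : ℤ) < (m * D - i) + 1 := by
    have : (m' * D - i' : ℝ) < (m * D - i) + 1 := by linarith
    exact_mod_cast this
  have e3 : (m - m') * (D : ℤ) = (i : ℤ) - i' := by linarith
  have e4 : (D : ℤ) ∣ (i : ℤ) - i' := ⟨m - m', by rw [← e3]; ring⟩
  have e5 := Int.eq_zero_of_abs_lt_dvd e4 (by rw [abs_lt]; omega)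
  omega

/-- Points at distance at most a `(d + 1)`-st of the side of the depth-`k` grid share a cell of that
grid for one of the `d + 1` shifts: each of the `d` coordinates excludes at most one shift. -/
lemma exists_good_shift {d : ℕ} {S : ℝ} (hS : 0 < S) (k : ℕ) {x y : EuclideanSpace ℝ (Fin d)}
    (h : dist x y * (d + 1) * ((d + 2 : ℕ) : ℝ) ^ k ≤ S) :
    ∃ i : Fin (d + 1), cell S i k x = cell S i k y := by
  by_contra! hcon
  have hcon' : ∀ i : Fin (d + 1), ∃ j, cell S i k x j ≠ cell S i k y j :=
    fun i => Function.ne_iff.1 (hcon i)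
  choose f hf using hcon'
  refine absurd (Fintype.card_le_of_injective f ?_) (by simp)
  intro i i' hii
  have hb : (0 : ℝ) < ((d + 2 : ℕ) : ℝ) ^ k := by positivity
  -- Since `d + 2 ≡ 1` modulo `d + 1`, the shift at depth `k` is `l / (d + 1)` up to an integer.
  obtain ⟨t, ht⟩ : ∃ t : ℕ, (d + 2) ^ k = (d + 1) * t + 1 := by
    have : (d + 2) ^ k ≡ 1 [MOD d + 1] := by
      have h1 : d + 2 ≡ 1 [MOD d + 1] := Nat.add_mod_left (d + 1) 1
      simpa using h1.pow k
    obtain ⟨t, ht⟩ := (Nat.modEq_iff_dvd' (Nat.one_le_pow _ _ (by omega))).1 this.symm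
    exact ⟨t, by have := Nat.one_le_pow k (d + 2) (by omega); omega⟩
  have ht' : ((d + 2 : ℕ) : ℝ) ^ k = (d + 1) * t + 1 := by exact_mod_cast ht
  have hcell : ∀ (l : ℕ) (z : EuclideanSpace ℝ (Fin d)) (j : Fin d), cell S l k z j
      = ⌊z j / S * ((d + 2 : ℕ) : ℝ) ^ k + l / ((d + 1 : ℕ) : ℝ)⌋ + ((l * t : ℕ) : ℤ) := by
    intro l z j
    rw [← Int.floor_add_natCast, cell]
    congr 1
    rw [add_mul, add_assoc]
    congr 1
    have : (d + 1 : ℝ) ≠ 0 := by positivity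
    rw [ht']
    push_cast
    field_simp
    ring
  have hj : ∀ j, |x j - y j| ≤ dist x y := by
    intro j
    rw [← Real.dist_eq, EuclideanSpace.dist_eq]
    refine Real.le_sqrt_of_sq_le ?_
    exact Finset.single_le_sum (f := fun j => dist (x j) (y j) ^ 2)
      (fun j _ => sq_nonneg _) (Finset.mem_univ j)
  have h1 := hf i
  have h2 := hf i'
  rw [← hii] at h2
  set j := f i
  rw [hcell, hcell, Ne, add_left_inj] at h1 h2
  have hgap : |x j - y j| * (d + 1) * ((d + 2 : ℕ) : ℝ) ^ k ≤ S :=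
    le_trans (by have := hj j; gcongr) h
  have hscaled : ∀ a c : ℝ, (a - c) * (d + 1) * ((d + 2 : ℕ) : ℝ) ^ k ≤ S →
      (a / S * ((d + 2 : ℕ) : ℝ) ^ k - c / S * ((d + 2 : ℕ) : ℝ) ^ k) * ((d + 1 : ℕ) : ℝ) ≤ 1 := by
    intro a c hac
    rw [← div_le_one hS] at hac
    refine le_of_eq_of_le ?_ hac
    push_cast
    field_simp
  refine Fin.ext ?_
  rcases le_total (x j) (y j) with hxy | hxy
  · refine shift_unique (Nat.succ_pos d) (by gcongr) (hscaled _ _ ?_) i.2 i'.2 h1 h2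
    rwa [abs_sub_comm, abs_of_nonneg (sub_nonneg.2 hxy)] at hgap
  · refine shift_unique (Nat.succ_pos d) (by gcongr) (hscaled _ _ ?_) i.2 i'.2 (Ne.symm h1)
      (Ne.symm h2)
    rwa [abs_of_nonneg (sub_nonneg.2 hxy)] at hgap

/-! ### Clusters of a grid hierarchy -/

open scoped Classical in
/-- The points of `P` in the cell of `p` at depth `k` of the `i`-th shifted grid. -/
noncomputable def cluster {d : ℕ} (P : Finset (EuclideanSpace ℝ (Fin d))) (S : ℝ) (i k : ℕ)
    (p : EuclideanSpace ℝ (Fin d)) : Finset (EuclideanSpace ℝ (Fin d)) :=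
  P.filter fun q => cell S i k q = cell S i k p

open scoped Classical in
/-- All clusters of the `i`-th shifted grid, over all depths. -/
noncomputable def clusters {d : ℕ} (P : Finset (EuclideanSpace ℝ (Fin d))) (S : ℝ) (i : ℕ) :
    Finset (Finset (EuclideanSpace ℝ (Fin d))) :=
  P.powerset.filter fun A => ∃ k, ∃ p ∈ P, A = cluster P S i k p

/-- The smallest depth at which the set `A` is a cluster of the `i`-th shifted grid
(`0` if it never is). -/
noncomputable def topDepth {d : ℕ} (P : Finset (EuclideanSpace ℝ (Fin d))) (S : ℝ) (i : ℕ)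
    (A : Finset (EuclideanSpace ℝ (Fin d))) : ℕ :=
  sInf {k | ∃ p ∈ P, A = cluster P S i k p}

lemma mem_cluster {d : ℕ} {P : Finset (EuclideanSpace ℝ (Fin d))} {S : ℝ} {i k : ℕ}
    {p q : EuclideanSpace ℝ (Fin d)} :
    q ∈ cluster P S i k p ↔ q ∈ P ∧ cell S i k q = cell S i k p := by
  simp [cluster]

lemma card_clusters_le {d : ℕ} (P : Finset (EuclideanSpace ℝ (Fin d))) (S : ℝ) (i : ℕ) :
    (clusters P S i).card ≤ 2 * P.card := by
  classical
  have aux : ∀ (k l : ℕ) (p q : EuclideanSpace ℝ (Fin d)), k ≤ l →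
      cluster P S i l q ⊆ cluster P S i k p ∨
        Disjoint (cluster P S i k p) (cluster P S i l q) := by
    intro k l p q hkl
    by_cases hdis : Disjoint (cluster P S i k p) (cluster P S i l q)
    · exact Or.inr hdis
    · left
      obtain ⟨z, hz1, hz2⟩ := Finset.not_disjoint_iff.1 hdis
      intro y hy
      rw [mem_cluster] at hz1 hz2 hy ⊢
      exact ⟨hy.1, (cell_mono hkl (hy.2.trans hz2.2.symm)).trans hz1.2⟩
  refine laminar_card_le P _ ?_ ?_
  · intro A hA
    obtain ⟨hA, k, p, hp, rfl⟩ := Finset.mem_filter.1 hA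
    exact ⟨Finset.mem_powerset.1 hA, p, mem_cluster.2 ⟨hp, rfl⟩⟩
  · intro A hA B hB
    obtain ⟨-, k, p, hp, rfl⟩ := Finset.mem_filter.1 hA
    obtain ⟨-, l, q, hq, rfl⟩ := Finset.mem_filter.1 hB
    rcases le_total k l with h | h
    · rcases aux k l p q h with h | h
      · exact Or.inr (Or.inl h)
      · exact Or.inr (Or.inr h)
    · rcases aux l k q p h with h | h
      · exact Or.inl h
      · exact Or.inr (Or.inr h.symm)

/-- For `p ≠ q` one of the shifted grids has a cluster `A` containing `p`, of diameter at most
`ε / 8 * dist p q`, whose depth determines `dist p q` up to a factor polynomial in `d` and `1 / ε`. -/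
lemma exists_cluster {d : ℕ} {P : Finset (EuclideanSpace ℝ (Fin d))} {S ε : ℝ}
    (hS : 0 < S) (hε : 0 < ε) (hε1 : ε < 1) {p q : EuclideanSpace ℝ (Fin d)} (hp : p ∈ P)
    (hq : q ∈ P) (hpq : p ≠ q) (hPS : dist p q * (d + 1) ≤ S) :
    ∃ i : Fin (d + 1), ∃ A ∈ clusters P S i, A ⊆ P ∧ p ∈ A ∧
      (∀ a ∈ A, ∀ b ∈ A, dist a b ≤ ε / 8 * dist p q) ∧
      S / ((d + 2 : ℕ) : ℝ) ^ topDepth P S i A ≤ (d + 1) * dist p q ∧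
      ε * dist p q ≤ 8 * d * (d + 2) * (S / ((d + 2 : ℕ) : ℝ) ^ topDepth P S i A) := by
  have hδ : 0 < dist p q := dist_pos.2 hpq
  set δ := dist p q with hδ_def
  have hb1 : (1 : ℝ) < ((d + 2 : ℕ) : ℝ) := by push_cast; linarith [Nat.cast_nonneg (α := ℝ) d]
  have hδd : 0 < δ * (d + 1) := by positivity
  -- `k` is the last depth at which the side is still at least `(d + 1) * dist p q`.
  obtain ⟨k, hk1, hk2⟩ := exists_nat_pow_near ((one_le_div hδd).2 hPS) hb1
  rw [le_div_iff₀' hδd] at hk1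
  rw [div_lt_iff₀' hδd] at hk2
  obtain ⟨i, hi⟩ := exists_good_shift hS k hk1
  -- `m` is the first depth at which all clusters are small enough.
  have hex : ∃ m : ℕ, d * (S / ((d + 2 : ℕ) : ℝ) ^ m) ≤ ε / 8 * δ := by
    obtain ⟨m, hm⟩ := pow_unbounded_of_one_lt (d * S / (ε / 8 * δ)) hb1
    refine ⟨m, ?_⟩
    rw [div_lt_iff₀ (by positivity)] at hm
    rw [← mul_div_assoc, div_le_iff₀ (by positivity)]
    linarith
  classical
  let m := Nat.find hex
  have hm : d * (S / ((d + 2 : ℕ) : ℝ) ^ m) ≤ ε / 8 * δ := Nat.find_spec hex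
  let A := cluster P S i m p
  have hne : {k | ∃ p ∈ P, A = cluster P S i k p}.Nonempty := ⟨m, p, hp, rfl⟩
  have htop : topDepth P S i A ≤ m := Nat.sInf_le ⟨p, hp, rfl⟩
  obtain ⟨p', hp', hA'⟩ : ∃ p' ∈ P, A = cluster P S i (topDepth P S i A) p' := Nat.sInf_mem hne
  set M := topDepth P S i A with hM
  have hpA : p ∈ A := mem_cluster.2 ⟨hp, rfl⟩
  have hdiam : ∀ a ∈ A, ∀ b ∈ A, dist a b ≤ ε / 8 * δ := by
    intro a ha b hb
    exact (dist_le_of_cell_eq hS ((mem_cluster.1 ha).2.trans (mem_cluster.1 hb).2.symm)).trans hm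
  have hkM : k + 1 ≤ M := by
    by_contra hlt
    have hqA : q ∈ A := by
      have := hpA
      rw [hA', mem_cluster] at this ⊢
      exact ⟨hq, (cell_mono (by omega) hi.symm).trans this.2⟩
    have := hdiam p hpA q hqA
    rw [← hδ_def] at this
    nlinarith
  refine ⟨i, A, ?_, Finset.filter_subset _ _, hpA, hdiam, ?_, ?_⟩
  · exact Finset.mem_filter.2 ⟨Finset.mem_powerset.2 (Finset.filter_subset _ _), m, p, hp, rfl⟩
  · rw [div_le_iff₀ (by positivity)]
    have := pow_le_pow_right₀ hb1.le hkM
    have := mul_le_mul_of_nonneg_left this hδd.le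
    linarith
  · have hmin : ¬ d * (S / ((d + 2 : ℕ) : ℝ) ^ (m - 1)) ≤ ε / 8 * δ :=
      Nat.find_min hex (by change m - 1 < m; omega)
    have hle : S / ((d + 2 : ℕ) : ℝ) ^ (m - 1) ≤ (d + 2) * (S / ((d + 2 : ℕ) : ℝ) ^ M) := by
      have h1 : S / ((d + 2 : ℕ) : ℝ) ^ (m - 1) ≤ S / ((d + 2 : ℕ) : ℝ) ^ (M - 1) := by
        gcongr
        exact hb1.le
      refine h1.trans (le_of_eq ?_)
      obtain ⟨M', hM'⟩ : ∃ M', M = M' + 1 := ⟨M - 1, by omega⟩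
      rw [hM', Nat.add_sub_cancel, pow_succ]
      have : ((d + 2 : ℕ) : ℝ) ≠ 0 := by positivity
      push_cast at this ⊢
      field_simp
    have h2 := mul_le_mul_of_nonneg_left hle (Nat.cast_nonneg (α := ℝ) d)
    linarith

/-! ### Counting -/

/-- The number `N` of rings needed per cluster is `O(log (2 + d / ε) / ε)`. -/
lemma exists_ring_count {d : ℕ} (hd : 1 ≤ d) {ε : ℝ} (hε : 0 < ε) (hε1 : ε < 1) :
    ∃ N : ℕ, 32 * (d : ℝ) * (d + 2) * (d + 1) / ε < (1 + ε / 8) ^ N ∧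
      (N : ℝ) ≤ 129 * (Real.log (2 + d / ε) / ε) := by
  have hd' : (1 : ℝ) ≤ d := by exact_mod_cast hd
  set y := 2 + (d : ℝ) / ε with hy
  have hdε : (d : ℝ) ≤ d / ε := by
    rw [le_div_iff₀ hε]; nlinarith
  have hy3 : 3 ≤ y := by linarith
  have hL1 : 1 ≤ Real.log y := by
    rw [Real.le_log_iff_exp_le (by linarith)]
    linarith [Real.exp_one_lt_d9]
  have hR : 32 * (d : ℝ) * (d + 2) * (d + 1) / ε ≤ y ^ 8 := by
    have h1 : 32 * (d : ℝ) * (d + 2) * (d + 1) / ε = 32 * (d / ε) * (d + 2) * (d + 1) := by ring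
    have h2 : (d : ℝ) / ε ≤ y := by linarith
    have h0 : (0 : ℝ) ≤ d / ε := by positivity
    calc 32 * (d : ℝ) * (d + 2) * (d + 1) / ε = 32 * (d / ε) * (d + 2) * (d + 1) := h1
      _ ≤ 32 * y * y * y := by gcongr <;> linarith
      _ ≤ 3 ^ 5 * y ^ 3 := by nlinarith [pow_pos (show 0 < y by linarith) 3]
      _ ≤ y ^ 5 * y ^ 3 := by gcongr
      _ = y ^ 8 := by ring
  have hlog : ε / 16 ≤ Real.log (1 + ε / 8) := by
    have h1 := Real.one_sub_inv_le_log_of_pos (show 0 < 1 + ε / 8 by linarith)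
    refine le_trans ?_ h1
    have : (1 + ε / 8)⁻¹ ≤ 1 - ε / 16 := by
      rw [inv_le_iff_one_le_mul₀ (by linarith)]
      nlinarith
    linarith
  refine ⟨⌊128 * Real.log y / ε⌋₊ + 1, ?_, ?_⟩
  · refine hR.trans_lt ?_
    rw [← Real.log_lt_log_iff (by positivity) (by positivity), Real.log_pow, Real.log_pow]
    have h1 := Nat.lt_floor_add_one (128 * Real.log y / ε)
    rw [div_lt_iff₀ hε] at h1
    push_cast
    have h2 := mul_le_mul_of_nonneg_left hlog
      (show (0 : ℝ) ≤ (⌊128 * Real.log y / ε⌋₊ : ℝ) + 1 by positivity)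
    linarith
  · push_cast
    have h1 := Nat.floor_le (show 0 ≤ 128 * Real.log y / ε by positivity)
    have h2 : 1 ≤ Real.log y / ε := by rw [le_div_iff₀ hε]; linarith
    have h3 : 128 * Real.log y / ε = 128 * (Real.log y / ε) := by ring
    linarith

theorem stmt3 :
    ∃ c : ℝ, 0 < c ∧
      ∀ (d : ℕ), 1 ≤ d →
        ∀ (P : Finset (EuclideanSpace ℝ (Fin d))) (n : ℕ) (ε : ℝ),
          P.card = n → 2 ≤ n → 0 < ε → ε < 1 →
          ∃ W : Finset (Finset (EuclideanSpace ℝ (Fin d)) × Finset (EuclideanSpace ℝ (Fin d))),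
            PairDecomp P W ∧
            (∀ pr ∈ W, IsStable ε pr.1 pr.2 ∧ IsSemiSeparated ε pr.1 pr.2) ∧
            (W.card : ℝ) ≤
              c * (d : ℝ) ^ 3 * ((n : ℝ) / ε) * Real.log (2 + (d : ℝ) / ε) := by
  refine ⟨516, by norm_num, ?_⟩
  intro d hd P n ε hn _ hε hε1
  have hd' : (1 : ℝ) ≤ d := by exact_mod_cast hd
  obtain ⟨N, hN1, hN2⟩ := exists_ring_count hd hε hε1
  obtain ⟨S, hS, hPS⟩ : ∃ S : ℝ, 0 < S ∧ ∀ p ∈ P, ∀ q ∈ P, dist p q * (d + 1) ≤ S := by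
    refine ⟨(∑ p ∈ P, ∑ q ∈ P, dist p q) * (d + 1) + 1, by positivity, fun p hp q hq => ?_⟩
    have h1 : dist p q ≤ ∑ q ∈ P, dist p q :=
      Finset.single_le_sum (f := fun q => dist p q) (fun _ _ => dist_nonneg) hq
    have h2 : ∑ q ∈ P, dist p q ≤ ∑ p ∈ P, ∑ q ∈ P, dist p q :=
      Finset.single_le_sum (f := fun p => ∑ q ∈ P, dist p q)
        (fun _ _ => Finset.sum_nonneg fun _ _ => dist_nonneg) hp
    nlinarith
  -- The inner radius leaves a factor `2` for replacing `p` by another point of its cluster.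
  obtain ⟨W, hW1, hW2, hW3⟩ := decomp_of_clusters P hε hε1 (d + 1) N (2 * n)
    (fun i => clusters P S i) (fun i => hn ▸ card_clusters_le P S i)
    (fun i A => S / ((d + 2 : ℕ) : ℝ) ^ topDepth P S i A / (2 * (d + 1)))
    (fun i A => by positivity) (by
      intro p hp q hq hpq
      obtain ⟨i, A, hA, hAP, hpA, hdiam, h1, h2⟩ :=
        exists_cluster hS hε hε1 hp hq hpq (hPS p hp q hq)
      refine ⟨i, A, hA, hAP, hpA, hdiam, fun a ha => ?_⟩
      have hδ : 0 < dist p q := dist_pos.2 hpq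
      set σ := S / ((d + 2 : ℕ) : ℝ) ^ topDepth P S i A with hσ
      have hσ0 : 0 < σ := by positivity
      have ha1 := dist_triangle p a q
      have ha2 := dist_triangle a p q
      have ha3 := hdiam p hpA a ha
      rw [dist_comm a p] at ha2
      have ha4 : ε / 8 * dist p q ≤ dist p q / 2 := by nlinarith
      constructor
      · rw [div_le_iff₀ (by positivity)]
        nlinarith
      · have h3 : σ / (2 * (d + 1)) * (32 * (d : ℝ) * (d + 2) * (d + 1) / ε)
            = 2 * (8 * d * (d + 2) * σ) / ε := by
          field_simp
          ring
        have h4 := mul_lt_mul_of_pos_left hN1 (show 0 < σ / (2 * ((d : ℝ) + 1)) by positivity)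
        refine lt_of_le_of_lt ?_ h4
        rw [h3, le_div_iff₀ hε]
        nlinarith)
  refine ⟨W, hW1, hW2, ?_⟩
  have hL : 0 ≤ Real.log (2 + (d : ℝ) / ε) :=
    Real.log_nonneg (by have : (0 : ℝ) ≤ d / ε := by positivity
                        linarith)
  have hd3 : (d : ℝ) ≤ (d : ℝ) ^ 3 := le_self_pow₀ hd' (by norm_num)
  calc (W.card : ℝ) ≤ ((d + 1) * (2 * n * N) : ℕ) := by exact_mod_cast hW3
    _ = (d + 1) * (2 * n * N) := by push_cast; ring
    _ ≤ (2 * (d : ℝ) ^ 3) * (2 * n * (129 * (Real.log (2 + d / ε) / ε))) := by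
        gcongr
        linarith
    _ = 516 * (d : ℝ) ^ 3 * ((n : ℝ) / ε) * Real.log (2 + (d : ℝ) / ε) := by ring
end

section
/- Let n ≥ 2 and let P = {6^i : i = 1, …, n} ⊆ ℝ with the usual metric on ℝ. If A and B are disjoint subsets of P with |A| ≥ 2 and |B| ≥ 2, then dmax(A,B) ≥ 5 · d(A,B); in particular, the pair {A,B} is not 1-stable. -/
/-!
Let `M` be the largest point of `A ∪ B`, say `M ∈ A`; pick another point `x ∈ A` and any `y ∈ B`.
Distinct points of `P` differ by a factor of at least `6` (`six_mul_le_of_lt`), so `x, y ∈ (0, M/6]`.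
Hence `5 * |x - y| < 5 * M / 6 ≤ M - y` (`exists_five_mul_dist_lt`), and so strictly
`5 * dmin A B < dmax A B`. As `0 ≤ dmin A B`, both claims follow.
-/

open scoped Classical

lemma dmin_le_dist {X : Type*} [MetricSpace X] {A B : Finset X} {a b : X}
    (ha : a ∈ A) (hb : b ∈ B) : dmin A B ≤ dist a b := by
  refine csInf_le ⟨0, ?_⟩ ⟨a, ha, b, hb, rfl⟩
  rintro r ⟨a, -, b, -, rfl⟩
  exact dist_nonneg

lemma dist_le_dmax {X : Type*} [MetricSpace X] {A B : Finset X} {a b : X}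
    (ha : a ∈ A) (hb : b ∈ B) : dist a b ≤ dmax A B := by
  refine le_csSup ?_ ⟨a, ha, b, hb, rfl⟩
  refine (((A ×ˢ B).image fun p => dist p.1 p.2).finite_toSet.subset ?_).bddAbove
  rintro r ⟨a, ha, b, hb, rfl⟩
  exact Finset.mem_coe.2 (Finset.mem_image.2 ⟨(a, b), Finset.mk_mem_product ha hb, rfl⟩)

lemma dmin_nonneg {X : Type*} [MetricSpace X] (A B : Finset X) : 0 ≤ dmin A B := by
  refine Real.sInf_nonneg ?_
  rintro r ⟨a, -, b, -, rfl⟩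
  exact dist_nonneg

lemma six_mul_le_of_lt {i j : ℕ} (h : (6 : ℝ) ^ i < 6 ^ j) : 6 * (6 : ℝ) ^ i ≤ 6 ^ j := by
  have hij : i < j := (pow_lt_pow_iff_right₀ (by norm_num)).1 h
  rw [← pow_succ']
  exact pow_le_pow_right₀ (by norm_num) hij

/-- The case where the largest point `M` of the union lies in `A`. Stating the conclusion with
explicit pairs lets it be applied with the two sets exchanged. -/
lemma exists_five_mul_dist_lt {A B : Finset ℝ} {M : ℝ}
    (hpos : ∀ u ∈ A ∪ B, 0 < u) (hsep : ∀ u ∈ A ∪ B, ∀ v ∈ A ∪ B, u < v → 6 * u ≤ v)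
    (hM : ∀ u ∈ A ∪ B, u ≤ M) (hMA : M ∈ A) (hdisj : Disjoint A B)
    (hA : 2 ≤ A.card) (hB : B.Nonempty) :
    ∃ x ∈ A, ∃ y ∈ B, 5 * dist x y < dist M y := by
  obtain ⟨x, hx, hxM⟩ := Finset.exists_mem_ne hA M
  obtain ⟨y, hy⟩ := hB
  have hxU := Finset.mem_union_left B hx
  have hyU := Finset.mem_union_right A hy
  have hMU := Finset.mem_union_left B hMA
  have hyM : y ≠ M := fun h => Finset.disjoint_left.1 hdisj hMA (h ▸ hy)
  have hx6 := hsep x hxU M hMU (lt_of_le_of_ne (hM x hxU) hxM)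
  have hy6 := hsep y hyU M hMU (lt_of_le_of_ne (hM y hyU) hyM)
  have hx0 := hpos x hxU
  have hy0 := hpos y hyU
  refine ⟨x, hx, y, hy, ?_⟩
  have hxy : dist x y < M / 6 := by
    rw [Real.dist_eq, abs_lt]
    constructor <;> linarith
  have hMy : M - y ≤ dist M y := le_abs_self _
  linarith

theorem stmt7 (n : ℕ) (hn : 2 ≤ n)
    (P : Finset ℝ) (hP : P = (Finset.Icc 1 n).image (fun i : ℕ => (6 : ℝ) ^ i))
    (A B : Finset ℝ) (hA : A ⊆ P) (hB : B ⊆ P) (hdisj : Disjoint A B)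
    (hAcard : 2 ≤ A.card) (hBcard : 2 ≤ B.card) :
    5 * dmin A B ≤ dmax A B ∧ ¬ IsStable 1 A B := by
  have hpow : ∀ u ∈ A ∪ B, ∃ i : ℕ, (6 : ℝ) ^ i = u := by
    intro u hu
    have hu' := Finset.union_subset hA hB hu
    rw [hP, Finset.mem_image] at hu'
    obtain ⟨i, -, hi⟩ := hu'
    exact ⟨i, hi⟩
  have hpos : ∀ u ∈ A ∪ B, 0 < u := by
    intro u hu
    obtain ⟨i, rfl⟩ := hpow u hu
    positivity
  have hsep : ∀ u ∈ A ∪ B, ∀ v ∈ A ∪ B, u < v → 6 * u ≤ v := by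
    intro u hu v hv huv
    obtain ⟨i, rfl⟩ := hpow u hu
    obtain ⟨j, rfl⟩ := hpow v hv
    exact six_mul_le_of_lt huv
  have hAne : A.Nonempty := Finset.card_pos.1 (by omega)
  have hBne : B.Nonempty := Finset.card_pos.1 (by omega)
  obtain ⟨M, hMU, hM⟩ := (A ∪ B).exists_max_image id (hAne.mono Finset.subset_union_left)
  have key : 5 * dmin A B < dmax A B := by
    rcases Finset.mem_union.1 hMU with hMA | hMB
    · obtain ⟨x, hx, y, hy, h⟩ := exists_five_mul_dist_lt (M := M) hpos hsep hM hMA hdisj hAcard hBne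
      linarith [dmin_le_dist hx hy, dist_le_dmax hMA hy]
    · rw [Finset.union_comm] at hpos hsep hM
      obtain ⟨x, hx, y, hy, h⟩ := exists_five_mul_dist_lt (M := M) hpos hsep hM hMB hdisj.symm hBcard hAne
      rw [dist_comm x y, dist_comm M y] at h
      linarith [dmin_le_dist hy hx, dist_le_dmax hy hMB]
  refine ⟨key.le, fun hst => ?_⟩
  have h3 : dmax A B ≤ (1 + 2 * 1) * dmin A B := hst
  linarith [dmin_nonneg A B]
end

section
/- Let n ≥ 2 and let P = {6^i : i = 1, …, n} ⊆ ℝ with the usual metric on ℝ. Then every 1-ABC W = {{A_1,B_1}, …, {A_s,B_s}} of P has weight Σ_{i=1}^{s} (|A_i| + |B_i|) ≥ n(n−1)/2. -/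
theorem dist_le_of_stable {A B : Finset ℝ} (h : IsStable 1 A B)
    {a b a' b' : ℝ} (ha : a ∈ A) (hb : b ∈ B) (ha' : a' ∈ A) (hb' : b' ∈ B) :
    |a - b| ≤ 3 * |a' - b'| := by
  have hfin : {r : ℝ | ∃ a ∈ A, ∃ b ∈ B, r = dist a b}.Finite := by
    refine ((A ×ˢ B).image (fun p => dist p.1 p.2)).finite_toSet.subset ?_
    rintro r ⟨x, hx, y, hy, rfl⟩
    simp only [Finset.coe_image, Set.mem_image, Finset.mem_coe, Finset.mem_product]
    exact ⟨(x, y), ⟨hx, hy⟩, rfl⟩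
  have h1 : dist a b ≤ dmax A B := le_csSup hfin.bddAbove ⟨a, ha, b, hb, rfl⟩
  have h2 : dmin A B ≤ dist a' b' := csInf_le hfin.bddBelow ⟨a', ha', b', hb', rfl⟩
  unfold IsStable at h
  rw [Real.dist_eq] at h1 h2
  linarith

/-- If `a` exceeds both `a'` and `b` by a factor of `6`, then the pairs of points `{a, b}` and
`{a', b}` cannot have distances within a factor of `3` of each other. -/
theorem no_smaller {a a' b : ℝ} (ha' : 0 < a') (hb : 0 < b) (h1 : 6 * a' ≤ a) (h2 : 6 * b ≤ a)
    (h : |a - b| ≤ 3 * |a' - b|) : False := by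
  have h3 : |a' - b| ≤ a / 6 := abs_le.2 ⟨by linarith, by linarith⟩
  have h4 := le_abs_self (a - b)
  linarith

/-- A `1`-stable pair of sets of positive reals whose points are separated by factors of at
least `6` has a singleton side. -/
theorem stable_card {P A B : Finset ℝ} (hpos : ∀ x ∈ P, 0 < x)
    (hgap : ∀ x ∈ P, ∀ y ∈ P, x < y → 6 * x ≤ y) (hA : A ⊆ P) (hB : B ⊆ P)
    (hd : Disjoint A B) (h : IsStable 1 A B) : A.card ≤ 1 ∨ B.card ≤ 1 := by
  by_contra! hc
  have two : ∀ S : Finset ℝ, 1 < S.card → ∃ x ∈ S, ∃ y ∈ S, x < y := fun S hS => by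
    obtain ⟨x, hx, y, hy, hxy⟩ := Finset.one_lt_card.1 hS
    rcases hxy.lt_or_gt with h | h
    exacts [⟨x, hx, y, hy, h⟩, ⟨y, hy, x, hx, h⟩]
  obtain ⟨a', ha', a, ha, haa⟩ := two A hc.1
  obtain ⟨b', hb', b, hb, hbb⟩ := two B hc.2
  rcases lt_trichotomy a b with hab | hab | hab
  · refine no_smaller (hpos _ (hB hb')) (hpos _ (hA ha)) (hgap _ (hB hb') _ (hB hb) hbb)
      (hgap _ (hA ha) _ (hB hb) hab) ?_
    have := dist_le_of_stable h ha hb ha hb'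
    rwa [abs_sub_comm b a, abs_sub_comm b' a]
  · exact Finset.disjoint_left.1 hd ha (hab ▸ hb)
  · exact no_smaller (hpos _ (hA ha')) (hpos _ (hB hb)) (hgap _ (hA ha') _ (hA ha) haa)
      (hgap _ (hB hb) _ (hA ha) hab) (dist_le_of_stable h ha hb ha' hb)

theorem stmt8 (n : ℕ) (hn : 2 ≤ n)
    (P : Finset ℝ) (hP : P = (Finset.Icc 1 n).image (fun i : ℕ => (6 : ℝ) ^ i))
    (W : Finset (Finset ℝ × Finset ℝ))
    (hW : PairDecomp P W) (hstable : ∀ pr ∈ W, IsStable 1 pr.1 pr.2) :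
    n * (n - 1) / 2 ≤ ∑ pr ∈ W, (pr.1.card + pr.2.card) := by
  have hpos : ∀ x ∈ P, 0 < x := by
    intro x hx
    obtain ⟨i, -, rfl⟩ := Finset.mem_image.1 (hP ▸ hx)
    positivity
  have hgap : ∀ x ∈ P, ∀ y ∈ P, x < y → 6 * x ≤ y := by
    intro x hx y hy hxy
    obtain ⟨i, -, rfl⟩ := Finset.mem_image.1 (hP ▸ hx)
    obtain ⟨j, -, rfl⟩ := Finset.mem_image.1 (hP ▸ hy)
    have hij : i < j := (pow_lt_pow_iff_right₀ (by norm_num : (1 : ℝ) < 6)).1 hxy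
    calc (6 : ℝ) * 6 ^ i = 6 ^ (i + 1) := by ring
      _ ≤ 6 ^ j := pow_le_pow_right₀ (by norm_num) hij
  have hcard : P.card = n := by
    rw [hP, Finset.card_image_of_injective _
      (pow_right_injective₀ (by norm_num : (0 : ℝ) < 6) (by norm_num)), Nat.card_Icc]
    omega
  have hcover : P.offDiag ⊆ W.biUnion (fun pr => pr.1 ×ˢ pr.2 ∪ pr.2 ×ˢ pr.1) := by
    rintro ⟨x, y⟩ hxy
    obtain ⟨hx, hy, hne⟩ := Finset.mem_offDiag.1 hxy
    obtain ⟨pr, hpr, h⟩ := hW.2 x hx y hy hne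
    simp only [Finset.mem_biUnion, Finset.mem_union, Finset.mem_product]
    exact ⟨pr, hpr, h⟩
  have hpair : ∀ pr ∈ W, (pr.1 ×ˢ pr.2 ∪ pr.2 ×ˢ pr.1).card ≤ 2 * (pr.1.card + pr.2.card) := by
    intro pr hpr
    obtain ⟨hA, hB, -, -, hd⟩ := hW.1 pr hpr
    refine (Finset.card_union_le _ _).trans ?_
    rw [Finset.card_product, Finset.card_product]
    rcases stable_card hpos hgap hA hB hd (hstable pr hpr) with h | h <;> nlinarith
  have hsum := (Finset.card_le_card hcover).trans
    (Finset.card_biUnion_le.trans (Finset.sum_le_sum hpair))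
  rw [Finset.offDiag_card, hcard, ← Finset.mul_sum] at hsum
  rw [Nat.mul_sub, mul_one]
  omega
end

section
/- Let G be a finite simple graph on vertex set V with |V| = n ≥ 1, let p ∉ V, and let d be the metric on V ∪ {p} defined by: d(u,v) = 1 for distinct adjacent u, v ∈ V, d(u,v) = 2 for distinct non-adjacent u, v ∈ V, and d(p,v) = 3 for all v ∈ V. Then for every integer k ≥ 1, the metric space (V ∪ {p}, d) admits a 3-WSPD of size at most n(n−1)/2 + k if and only if there exist k cliques Q_1, …, Q_k of G with Q_1 ∪ ⋯ ∪ Q_k = V. -/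
/-!
Any two points of `V` are at distance at most `2`, so a well-separated pair of subsets of `V` has
diameters at most `2/3` and consists of two singletons; such a pair separates exactly one of the
`n (n - 1) / 2` two-element subsets of `V`. A well-separated pair with `p` on one side has
separation `3`, hence diameters at most `1`: the side of `p` is `{p}` and the other side is a
clique of `G`. So a decomposition spends at least `n (n - 1) / 2` pairs on `V` itself, and the
remaining pairs, at most `k` of them, give cliques covering `V`. Conversely, the pairs `{{u}, {v}}`
together with the pairs `{{p}, Q i}` for nonempty `Q i` form a decomposition of the required size.

`isWellSep3_iff` replaces the extrema in the definition of well-separatedness by pointwise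
inequalities; `sides_of_none_mem` and `sides_of_none_notMem` are the two structural facts above.
The point `p` is `none : Option V`.
-/

/-- Minimum distance between two nonempty finite sets, w.r.t. a distance function `d`. -/
noncomputable def dminD {X : Type*} (d : X → X → ℝ) (A B : Finset X) : ℝ :=
  sInf {r : ℝ | ∃ a ∈ A, ∃ b ∈ B, r = d a b}

/-- Diameter of a nonempty finite set, w.r.t. a distance function `d`. -/
noncomputable def fdiamD {X : Type*} (d : X → X → ℝ) (A : Finset X) : ℝ :=
  sSup {r : ℝ | ∃ x ∈ A, ∃ y ∈ A, r = d x y}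

/-- A pair `{A, B}` is `3`-well-separated w.r.t. `d` if
`max(diam A, diam B) ≤ (1/3) · d(A,B)`. -/
def IsWellSep3 {X : Type*} (d : X → X → ℝ) (A B : Finset X) : Prop :=
  max (fdiamD d A) (fdiamD d B) ≤ (1 / 3) * dminD d A B

/-- For nonempty finite sets the supremum and infimum are attained, so well-separatedness can be
tested on points. -/
theorem isWellSep3_iff {X : Type*} (d : X → X → ℝ) {A B : Finset X}
    (hA : A.Nonempty) (hB : B.Nonempty) :
    IsWellSep3 d A B ↔
      (∀ x ∈ A, ∀ y ∈ A, ∀ a ∈ A, ∀ b ∈ B, 3 * d x y ≤ d a b) ∧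
      (∀ x ∈ B, ∀ y ∈ B, ∀ a ∈ A, ∀ b ∈ B, 3 * d x y ≤ d a b) := by
  have hfin : ∀ C D : Finset X, {r : ℝ | ∃ a ∈ C, ∃ b ∈ D, r = d a b}.Finite := by
    intro C D
    refine ((C ×ˢ D).finite_toSet.image fun q => d q.1 q.2).subset ?_
    rintro r ⟨a, ha, b, hb, rfl⟩
    exact ⟨(a, b), by simp [ha, hb], rfl⟩
  have hne : ∀ {C D : Finset X}, C.Nonempty → D.Nonempty →
      {r : ℝ | ∃ a ∈ C, ∃ b ∈ D, r = d a b}.Nonempty := by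
    rintro C D ⟨c, hc⟩ ⟨e, he⟩
    exact ⟨_, c, hc, e, he, rfl⟩
  unfold IsWellSep3
  rw [max_le_iff]
  have side : ∀ {C : Finset X}, C.Nonempty →
      (fdiamD d C ≤ 1 / 3 * dminD d A B ↔
        ∀ x ∈ C, ∀ y ∈ C, ∀ a ∈ A, ∀ b ∈ B, 3 * d x y ≤ d a b) := by
    intro C hC
    constructor
    · intro h x hx y hy a ha b hb
      have h1 : d x y ≤ fdiamD d C := le_csSup (hfin C C).bddAbove ⟨x, hx, y, hy, rfl⟩
      have h2 : dminD d A B ≤ d a b := csInf_le (hfin A B).bddBelow ⟨a, ha, b, hb, rfl⟩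
      linarith
    · intro h
      refine csSup_le (hne hC hC) ?_
      rintro r ⟨x, hx, y, hy, rfl⟩
      have : 3 * d x y ≤ dminD d A B := by
        refine le_csInf (hne hA hB) ?_
        rintro s ⟨a, ha, b, hb, rfl⟩
        exact h x hx y hy a ha b hb
      linarith
  exact and_congr (side hA) (side hB)

/-- If `p` lies in one side of a well-separated pair, that side contains no vertex and the other
side is a clique, because the separation is `3` and hence distances within a side are at most `1`. -/
theorem sides_of_none_mem {V : Type*} (G : SimpleGraph V) [DecidableRel G.Adj]
    (d : Option V → Option V → ℝ)
    (hvv : ∀ u v : V, u ≠ v → d (some u) (some v) = if G.Adj u v then 1 else 2)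
    (hpv : ∀ v : V, d none (some v) = 3)
    {A B : Finset (Option V)} (hdisj : Disjoint A B) (hB : B.Nonempty)
    (hp : none ∈ A)
    (h1 : ∀ x ∈ A, ∀ y ∈ A, ∀ a ∈ A, ∀ b ∈ B, 3 * d x y ≤ d a b)
    (h2 : ∀ x ∈ B, ∀ y ∈ B, ∀ a ∈ A, ∀ b ∈ B, 3 * d x y ≤ d a b) :
    (∀ v, some v ∉ A) ∧ ∀ u v, some u ∈ B → some v ∈ B → u ≠ v → G.Adj u v := by
  have hpB : none ∉ B := Finset.disjoint_left.1 hdisj hp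
  obtain ⟨b, hb⟩ := hB
  obtain _ | w := b
  · exact absurd hb hpB
  constructor
  · intro v hv
    have := h1 none hp (some v) hv none hp (some w) hb
    rw [hpv, hpv] at this
    norm_num at this
  · intro u v hu hv huv
    by_contra hna
    have := h2 (some u) hu (some v) hv none hp (some w) hb
    rw [hpv, hvv u v huv, if_neg hna] at this
    norm_num at this

/-- If a pair separates two vertices, its separation is at most `2`, so a side `C` without `p` that
meets the well-separation bound has at most one point. -/
theorem sides_of_none_notMem {V : Type*} (G : SimpleGraph V) [DecidableRel G.Adj]
    (d : Option V → Option V → ℝ)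
    (hvv : ∀ u v : V, u ≠ v → d (some u) (some v) = if G.Adj u v then 1 else 2)
    {A B C : Finset (Option V)} (hdisj : Disjoint A B)
    {u v : V} (hu : some u ∈ A) (hv : some v ∈ B) (hpC : none ∉ C)
    (h : ∀ x ∈ C, ∀ y ∈ C, ∀ a ∈ A, ∀ b ∈ B, 3 * d x y ≤ d a b)
    {x y : Option V} (hx : x ∈ C) (hy : y ∈ C) : x = y := by
  have huv : u ≠ v := by
    rintro rfl
    exact Finset.disjoint_left.1 hdisj hu hv
  obtain _ | x := x
  · exact absurd hx hpC
  obtain _ | y := y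
  · exact absurd hy hpC
  by_contra hne
  have hxy : x ≠ y := fun e => hne (by rw [e])
  have := h _ hx _ hy _ hu _ hv
  rw [hvv x y hxy, hvv u v huv] at this
  split_ifs at this <;> norm_num at this

/-- A family of at most `k` sets can be listed by `Fin k`, padding with empty sets. -/
theorem exists_fin_family {α V : Type*} (s : Finset α) (f : α → Finset V) {k : ℕ}
    (hk : s.card ≤ k) :
    ∃ Q : Fin k → Finset V, (∀ i, Q i = ∅ ∨ ∃ a ∈ s, Q i = f a) ∧
      ∀ a ∈ s, ∃ i, Q i = f a := by
  refine ⟨fun i => if h : i.1 < s.card then f (s.equivFin.symm ⟨i, h⟩) else ∅, ?_, ?_⟩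
  · intro i
    by_cases h : i.1 < s.card
    · right
      exact ⟨_, (s.equivFin.symm ⟨i, h⟩).2, by simp [h]⟩
    · left
      simp [h]
  · intro a ha
    refine ⟨⟨s.equivFin ⟨a, ha⟩, (s.equivFin ⟨a, ha⟩).2.trans_le hk⟩, ?_⟩
    simp

theorem stmt11 {V : Type*} [Fintype V] [DecidableEq V]
    (G : SimpleGraph V) [DecidableRel G.Adj]
    (n : ℕ) (hn : Fintype.card V = n) (hn1 : 1 ≤ n)
    (d : Option V → Option V → ℝ)
    (hdiag : ∀ x : Option V, d x x = 0)
    (hvv : ∀ u v : V, u ≠ v → d (some u) (some v) = if G.Adj u v then 1 else 2)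
    (hpv : ∀ v : V, d none (some v) = 3)
    (hvp : ∀ v : V, d (some v) none = 3)
    (k : ℕ) (hk : 1 ≤ k) :
    (∃ W : Finset (Finset (Option V) × Finset (Option V)),
        PairDecomp (Finset.univ : Finset (Option V)) W ∧
        (∀ pr ∈ W, IsWellSep3 d pr.1 pr.2) ∧
        W.card ≤ n * (n - 1) / 2 + k)
    ↔ (∃ Q : Fin k → Finset V,
        (∀ i, G.IsClique (Q i : Set V)) ∧
        Finset.univ.biUnion Q = (Finset.univ : Finset V)) := by
  have hcard : ((Finset.univ : Finset V).powersetCard 2).card = n * (n - 1) / 2 := by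
    rw [Finset.card_powersetCard, Finset.card_univ, hn, Nat.choose_two_right]
  have hsym : ∀ x y, d x y = d y x := by
    rintro (_ | u) (_ | v)
    · rfl
    · rw [hpv, hvp]
    · rw [hpv, hvp]
    · by_cases h : u = v
      · rw [h]
      · rw [hvv u v h, hvv v u (Ne.symm h)]
        simp only [G.adj_comm]
  constructor
  · rintro ⟨W, ⟨hW, hcov⟩, hsep, hWc⟩
    have hsep' := fun pr (hpr : pr ∈ W) =>
      (isWellSep3_iff d (hW pr hpr).2.2.1 (hW pr hpr).2.2.2.1).1 (hsep pr hpr)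
    have hnone : ∀ pr ∈ W, none ∈ pr.1 →
        (∀ v, some v ∉ pr.1) ∧ ∀ u v, some u ∈ pr.2 → some v ∈ pr.2 → u ≠ v → G.Adj u v := by
      intro pr hpr hp
      obtain ⟨-, -, h1, h2, h3⟩ := hW pr hpr
      exact sides_of_none_mem G d hvv hpv h3 h2 hp (hsep' pr hpr).1 (hsep' pr hpr).2
    have hnone' : ∀ pr ∈ W, none ∈ pr.2 →
        (∀ v, some v ∉ pr.2) ∧ ∀ u v, some u ∈ pr.1 → some v ∈ pr.1 → u ≠ v → G.Adj u v := by
      intro pr hpr hp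
      obtain ⟨-, -, h1, h2, h3⟩ := hW pr hpr
      refine sides_of_none_mem G d hvv hpv h3.symm h1 hp ?_ ?_
      · intro x hx y hy a ha b hb
        rw [hsym a b]
        exact (hsep' pr hpr).2 x hx y hy b hb a ha
      · intro x hx y hy a ha b hb
        rw [hsym a b]
        exact (hsep' pr hpr).1 x hx y hy b hb a ha
    let W0 := W.filter fun pr => none ∈ pr.1 ∨ none ∈ pr.2
    let W1 := W.filter fun pr => ¬ (none ∈ pr.1 ∨ none ∈ pr.2)
    have hsplit : W0.card + W1.card = W.card :=
      Finset.card_filter_add_card_filter_not _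
    -- Every two-element subset of `V` is the union of the two sides of a pair avoiding `p`.
    have hW1 : n * (n - 1) / 2 ≤ W1.card := by
      rw [← hcard]
      refine (Finset.card_le_card (t := W1.image fun pr => (pr.1 ∪ pr.2).eraseNone) ?_).trans
        Finset.card_image_le
      intro s hs
      obtain ⟨u, v, huv, rfl⟩ := Finset.card_eq_two.1 (Finset.mem_powersetCard.1 hs).2
      obtain ⟨pr, hpr, hm⟩ := hcov (some u) (Finset.mem_univ _) (some v) (Finset.mem_univ _)
        (by simpa using huv)
      have hp1 : none ∉ pr.1 := by
        intro hp
        have := (hnone pr hpr hp).1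
        rcases hm with hm | hm
        · exact this _ hm.1
        · exact this _ hm.2
      have hp2 : none ∉ pr.2 := by
        intro hp
        have := (hnone' pr hpr hp).1
        rcases hm with hm | hm
        · exact this _ hm.2
        · exact this _ hm.1
      have hdisj := (hW pr hpr).2.2.2.2
      have e1 : ∀ x ∈ pr.1, ∀ y ∈ pr.1, x = y := by
        intro x hx y hy
        rcases hm with hm | hm
        · exact sides_of_none_notMem G d hvv hdisj hm.1 hm.2 hp1 (hsep' pr hpr).1 hx hy
        · exact sides_of_none_notMem G d hvv hdisj hm.2 hm.1 hp1 (hsep' pr hpr).1 hx hy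
      have e2 : ∀ x ∈ pr.2, ∀ y ∈ pr.2, x = y := by
        intro x hx y hy
        rcases hm with hm | hm
        · exact sides_of_none_notMem G d hvv hdisj hm.1 hm.2 hp2 (hsep' pr hpr).2 hx hy
        · exact sides_of_none_notMem G d hvv hdisj hm.2 hm.1 hp2 (hsep' pr hpr).2 hx hy
      refine Finset.mem_image.2 ⟨pr, Finset.mem_filter.2 ⟨hpr, by tauto⟩, ?_⟩
      ext w
      simp only [Finset.mem_eraseNone, Finset.mem_union, Finset.mem_insert, Finset.mem_singleton]
      constructor
      · rintro (hw | hw)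
        · rcases hm with hm | hm
          · exact Or.inl (Option.some_injective _ (e1 _ hw _ hm.1))
          · exact Or.inr (Option.some_injective _ (e1 _ hw _ hm.2))
        · rcases hm with hm | hm
          · exact Or.inr (Option.some_injective _ (e2 _ hw _ hm.2))
          · exact Or.inl (Option.some_injective _ (e2 _ hw _ hm.1))
      · rintro (rfl | rfl) <;> tauto
    have hW0 : W0.card ≤ k := by omega
    obtain ⟨Q, hQ1, hQ2⟩ := exists_fin_family W0 (fun pr => (pr.1 ∪ pr.2).eraseNone) hW0
    refine ⟨Q, ?_, ?_⟩
    · intro i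
      rcases hQ1 i with h | ⟨pr, hpr, h⟩
      · simp [h]
      · rw [h]
        obtain ⟨hpr, hp⟩ := Finset.mem_filter.1 hpr
        intro u hu v hv huv
        simp only [Finset.mem_coe, Finset.mem_eraseNone, Finset.mem_union] at hu hv
        rcases hp with hp | hp
        · obtain ⟨h1, h2⟩ := hnone pr hpr hp
          exact h2 u v (hu.resolve_left (h1 u)) (hv.resolve_left (h1 v)) huv
        · obtain ⟨h1, h2⟩ := hnone' pr hpr hp
          exact h2 u v (hu.resolve_right (h1 u)) (hv.resolve_right (h1 v)) huv
    · refine Finset.eq_univ_iff_forall.2 fun v => ?_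
      obtain ⟨pr, hpr, hm⟩ := hcov none (Finset.mem_univ _) (some v) (Finset.mem_univ _)
        (by simp)
      obtain ⟨i, hi⟩ := hQ2 pr (Finset.mem_filter.2 ⟨hpr, by tauto⟩)
      refine Finset.mem_biUnion.2 ⟨i, Finset.mem_univ _, ?_⟩
      rw [hi]
      simp only [Finset.mem_eraseNone, Finset.mem_union]
      tauto
  · rintro ⟨Q, hQ, hQU⟩
    -- `f` orders each two-element subset `{a, b}` of `V` into a pair of singletons.
    have hex : ∀ s : Finset V, ∃ pr : Finset (Option V) × Finset (Option V), s.card = 2 →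
        ∃ a b, a ≠ b ∧ s = {a, b} ∧ pr = ({some a}, {some b}) := by
      intro s
      by_cases hs : s.card = 2
      · obtain ⟨a, b, hab, h⟩ := Finset.card_eq_two.1 hs
        exact ⟨_, fun _ => ⟨a, b, hab, h, rfl⟩⟩
      · exact ⟨(∅, ∅), fun h => absurd h hs⟩
    choose f hf using hex
    let W1 := ((Finset.univ : Finset V).powersetCard 2).image f
    let W0 : Finset (Finset (Option V) × Finset (Option V)) :=
      (Finset.univ.filter fun i => (Q i).Nonempty).image fun i => ({none}, (Q i).map .some)
    have hmem1 : ∀ pr ∈ W1, ∃ a b, a ≠ b ∧ pr = ({some a}, {some b}) := by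
      intro pr hpr
      obtain ⟨s, hs, rfl⟩ := Finset.mem_image.1 hpr
      obtain ⟨a, b, hab, -, h⟩ := hf s (Finset.mem_powersetCard.1 hs).2
      exact ⟨a, b, hab, h⟩
    have hmem0 : ∀ pr ∈ W0, ∃ i, (Q i).Nonempty ∧ pr = ({none}, (Q i).map .some) := by
      intro pr hpr
      obtain ⟨i, hi, rfl⟩ := Finset.mem_image.1 hpr
      exact ⟨i, (Finset.mem_filter.1 hi).2, rfl⟩
    have hpairs : ∀ pr ∈ W1 ∪ W0,
        pr.1.Nonempty ∧ pr.2.Nonempty ∧ Disjoint pr.1 pr.2 := by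
      intro pr hpr
      rcases Finset.mem_union.1 hpr with h | h
      · obtain ⟨a, b, hab, rfl⟩ := hmem1 pr h
        simpa using hab
      · obtain ⟨i, hi, rfl⟩ := hmem0 pr h
        simpa using hi
    refine ⟨W1 ∪ W0, ⟨fun pr hpr => ⟨Finset.subset_univ _, Finset.subset_univ _,
      hpairs pr hpr⟩, ?_⟩, ?_, ?_⟩
    · have hp : ∀ v : V, ∃ pr ∈ W1 ∪ W0, none ∈ pr.1 ∧ some v ∈ pr.2 := by
        intro v
        have hv : v ∈ Finset.univ.biUnion Q := by
          rw [hQU]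
          exact Finset.mem_univ v
        obtain ⟨i, -, hi⟩ := Finset.mem_biUnion.1 hv
        refine ⟨({none}, (Q i).map .some), Finset.mem_union_right _ (Finset.mem_image.2
          ⟨i, Finset.mem_filter.2 ⟨Finset.mem_univ _, ⟨v, hi⟩⟩, rfl⟩), ?_⟩
        simpa using hi
      rintro (_ | u) - (_ | v) - hne
      · exact absurd rfl hne
      · obtain ⟨pr, hpr, h⟩ := hp v
        exact ⟨pr, hpr, Or.inl h⟩
      · obtain ⟨pr, hpr, h⟩ := hp u
        exact ⟨pr, hpr, Or.inr h.symm⟩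
      · have huv : u ≠ v := fun e => hne (by rw [e])
        have hc : ({u, v} : Finset V).card = 2 := Finset.card_pair huv
        obtain ⟨a, b, hab, hs, h⟩ := hf _ hc
        refine ⟨f {u, v}, Finset.mem_union_left _ (Finset.mem_image_of_mem _
          (Finset.mem_powersetCard.2 ⟨Finset.subset_univ _, hc⟩)), ?_⟩
        rw [h]
        have hu : u ∈ ({a, b} : Finset V) := hs ▸ by simp
        have hv : v ∈ ({a, b} : Finset V) := hs ▸ by simp
        simp only [Finset.mem_insert, Finset.mem_singleton, Option.some.injEq] at hu hv ⊢
        grind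
    · intro pr hpr
      obtain ⟨h1, h2, -⟩ := hpairs pr hpr
      rw [isWellSep3_iff d h1 h2]
      rcases Finset.mem_union.1 hpr with h | h
      · obtain ⟨a, b, hab, rfl⟩ := hmem1 pr h
        have : 0 ≤ d (some a) (some b) := by
          rw [hvv a b hab]
          split_ifs <;> norm_num
        simpa [hdiag] using this
      · obtain ⟨i, hi, rfl⟩ := hmem0 pr h
        have hQi : ∀ x ∈ Q i, ∀ y ∈ Q i, d (some x) (some y) ≤ 1 := by
          intro x hx y hy
          by_cases hxy : x = y
          · rw [hxy, hdiag]
            norm_num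
          · rw [hvv x y hxy, if_pos (hQ i hx hy hxy)]
        constructor
        · simp [hdiag, hpv]
        · simp only [Finset.mem_map, Finset.mem_singleton]
          rintro _ ⟨x, hx, rfl⟩ _ ⟨y, hy, rfl⟩ _ rfl _ ⟨z, -, rfl⟩
          have := hQi x hx y hy
          simp only [Function.Embedding.some_apply, hpv]
          linarith
    · calc (W1 ∪ W0).card ≤ W1.card + W0.card := Finset.card_union_le _ _
        _ ≤ n * (n - 1) / 2 + k := by
          refine Nat.add_le_add (hcard ▸ Finset.card_image_le) ?_
          refine Finset.card_image_le.trans ((Finset.card_filter_le _ _).trans ?_)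
          simp
end

section
/- Let G be a finite simple graph on vertex set V, let β ≥ 1 be an integer, and let U = V × {1, …, β} with the layered metric d defined by: d((x,i),(y,j)) = 0 if (x,i) = (y,j); d((x,i),(y,j)) = 3 if i ≠ j; d((x,i),(y,i)) = 1 if x ≠ y and xy is an edge of G; and d((x,i),(y,i)) = 2 if x ≠ y and xy is not an edge of G. Then for every 3-well-separated pair {X, Y} of disjoint nonempty subsets of U there exist indices i and j such that X ⊆ V × {i} and Y ⊆ V × {j}. -/
/-- The set of pairwise distances is finite, so `fdiamD` is a genuine supremum. -/
theorem le_fdiamD {X : Type*} (d : X → X → ℝ) (A : Finset X) {x y : X}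
    (hx : x ∈ A) (hy : y ∈ A) : d x y ≤ fdiamD d A := by
  refine le_csSup ?_ ⟨x, hx, y, hy, rfl⟩
  refine (((A ×ˢ A).finite_toSet.image fun p => d p.1 p.2).subset ?_).bddAbove
  rintro r ⟨a, ha, b, hb, rfl⟩
  exact ⟨(a, b), by simp [ha, hb], rfl⟩

/-- The set of cross distances is finite, so `dminD` is a genuine infimum. -/
theorem dminD_le {X : Type*} (d : X → X → ℝ) (A B : Finset X) {a b : X}
    (ha : a ∈ A) (hb : b ∈ B) : dminD d A B ≤ d a b := by
  refine csInf_le ?_ ⟨a, ha, b, hb, rfl⟩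
  refine (((A ×ˢ B).finite_toSet.image fun p => d p.1 p.2).subset ?_).bddBelow
  rintro r ⟨a, ha, b, hb, rfl⟩
  exact ⟨(a, b), by simp [ha, hb], rfl⟩

theorem stmt12 {V : Type*} [Fintype V] [DecidableEq V]
    (G : SimpleGraph V) (β : ℕ) (hβ : 1 ≤ β)
    (d : V × Fin β → V × Fin β → ℝ)
    (hdiag : ∀ u : V × Fin β, d u u = 0)
    (hlayers : ∀ (x y : V) (i j : Fin β), i ≠ j → d (x, i) (y, j) = 3)
    (hadj : ∀ (x y : V) (i : Fin β), x ≠ y → G.Adj x y → d (x, i) (y, i) = 1)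
    (hnadj : ∀ (x y : V) (i : Fin β), x ≠ y → ¬ G.Adj x y → d (x, i) (y, i) = 2) :
    ∀ X Y : Finset (V × Fin β), X.Nonempty → Y.Nonempty → Disjoint X Y →
      IsWellSep3 d X Y →
      ∃ i j : Fin β, (∀ u ∈ X, u.2 = i) ∧ (∀ u ∈ Y, u.2 = j) := by
  rintro X Y ⟨a, ha⟩ ⟨b, hb⟩ - hsep
  have hle : ∀ u v, d u v ≤ 3 := by
    rintro ⟨x, i⟩ ⟨y, j⟩
    by_cases hij : i = j
    · subst hij
      by_cases hxy : x = y
      · subst hxy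
        rw [hdiag]
        norm_num
      · by_cases h : G.Adj x y
        · rw [hadj x y i hxy h]
          norm_num
        · rw [hnadj x y i hxy h]
          norm_num
    · exact (hlayers x y i j hij).le
  have hmin : dminD d X Y ≤ 3 := (dminD_le d X Y ha hb).trans (hle a b)
  obtain ⟨hX, hY⟩ := max_le_iff.mp hsep
  have key : ∀ A : Finset (V × Fin β), fdiamD d A ≤ 1 / 3 * dminD d X Y →
      ∀ u ∈ A, ∀ v ∈ A, u.2 = v.2 := by
    intro A hA u hu v hv
    by_contra hne
    have h1 := le_fdiamD d A hu hv
    have h2 : d u v = 3 := hlayers u.1 v.1 u.2 v.2 hne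
    linarith
  exact ⟨a.2, b.2, fun u hu => key X hX u hu a ha, fun u hu => key Y hY u hu b hb⟩
end

section
/- Let G be a finite simple graph on vertex set V with |V| = n ≥ 1, let β ≥ 1 be an integer, and let U = V × {1, …, β} carry the layered metric d defined by: d((x,i),(y,j)) = 3 if i ≠ j; d((x,i),(y,i)) = 1 if x ≠ y and xy is an edge of G; d((x,i),(y,i)) = 2 if x ≠ y and xy is not an edge of G; and d = 0 on the diagonal. If there exist k ≥ 1 nonempty cliques Q_1, …, Q_k of G with Q_1 ∪ ⋯ ∪ Q_k = V, then (U, d) admits a 3-WSPD of size at most (β(β−1)/2) · k² + β · n(n−1)/2. -/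
/-- A single threshold `δ` that bounds both diameters and, multiplied by `3`, bounds the mutual
distance from below. Nonemptiness matters: `sInf ∅ = 0` for reals. -/
lemma isWellSep3_of_bounds {X : Type*} (d : X → X → ℝ) (A B : Finset X) (δ : ℝ) (hδ : 0 ≤ δ)
    (hA : A.Nonempty) (hB : B.Nonempty)
    (hdA : ∀ x ∈ A, ∀ y ∈ A, d x y ≤ δ) (hdB : ∀ x ∈ B, ∀ y ∈ B, d x y ≤ δ)
    (hAB : ∀ x ∈ A, ∀ y ∈ B, 3 * δ ≤ d x y) : IsWellSep3 d A B := by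
  have h1 : fdiamD d A ≤ δ := by
    apply Real.sSup_le _ hδ
    rintro r ⟨x, hx, y, hy, rfl⟩
    exact hdA x hx y hy
  have h2 : fdiamD d B ≤ δ := by
    apply Real.sSup_le _ hδ
    rintro r ⟨x, hx, y, hy, rfl⟩
    exact hdB x hx y hy
  have h3 : 3 * δ ≤ dminD d A B := by
    obtain ⟨a, ha⟩ := hA
    obtain ⟨b, hb⟩ := hB
    refine le_csInf ⟨d a b, a, ha, b, hb, rfl⟩ ?_
    rintro r ⟨x, hx, y, hy, rfl⟩
    exact hAB x hx y hy
  refine max_le ?_ ?_ <;> linarith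

lemma card_lt_pairs (m : ℕ) :
    (Finset.univ.filter fun p : Fin m × Fin m => p.1 < p.2).card = m * (m - 1) / 2 := by
  rw [← Finset.sum_range_id, Finset.card_filter, Fintype.sum_prod_type_right, Finset.sum_range]
  refine Finset.sum_congr rfl fun j _ => ?_
  rw [← Finset.card_filter]
  have : (Finset.univ.filter fun i : Fin m => i < j) = Finset.Iio j := by
    ext i
    simp
  rw [this, Fin.card_Iio]

theorem stmt13 {V : Type*} [Fintype V] [DecidableEq V]
    (G : SimpleGraph V) (n : ℕ) (hn : Fintype.card V = n) (hn1 : 1 ≤ n)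
    (β : ℕ) (hβ : 1 ≤ β)
    (d : V × Fin β → V × Fin β → ℝ)
    (hdiag : ∀ u : V × Fin β, d u u = 0)
    (hlayers : ∀ (x y : V) (i j : Fin β), i ≠ j → d (x, i) (y, j) = 3)
    (hadj : ∀ (x y : V) (i : Fin β), x ≠ y → G.Adj x y → d (x, i) (y, i) = 1)
    (hnadj : ∀ (x y : V) (i : Fin β), x ≠ y → ¬ G.Adj x y → d (x, i) (y, i) = 2)
    (k : ℕ) (hk : 1 ≤ k)
    (Q : Fin k → Finset V) (hclique : ∀ i, G.IsClique (Q i : Set V))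
    (hne : ∀ i, (Q i).Nonempty)
    (hcover : Finset.univ.biUnion Q = (Finset.univ : Finset V)) :
    ∃ W : Finset (Finset (V × Fin β) × Finset (V × Fin β)),
      PairDecomp (Finset.univ : Finset (V × Fin β)) W ∧
      (∀ pr ∈ W, IsWellSep3 d pr.1 pr.2) ∧
      W.card ≤ β * (β - 1) / 2 * k ^ 2 + β * (n * (n - 1) / 2) := by
  classical
  -- The enumeration `e` of `V` picks one ordered representative of each pair of vertices.
  let e : V ≃ Fin n := Fintype.equivFinOfCardEq hn
  let L (m : ℕ) : Finset (Fin m × Fin m) := Finset.univ.filter fun p => p.1 < p.2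
  let cross : ((Fin β × Fin β) × (Fin k × Fin k)) →
      Finset (V × Fin β) × Finset (V × Fin β) :=
    fun t => (Q t.2.1 ×ˢ {t.1.1}, Q t.2.2 ×ˢ {t.1.2})
  let single : (Fin β × (Fin n × Fin n)) → Finset (V × Fin β) × Finset (V × Fin β) :=
    fun t => ({(e.symm t.2.1, t.1)}, {(e.symm t.2.2, t.1)})
  let W := (L β ×ˢ Finset.univ).image cross ∪ (Finset.univ ×ˢ L n).image single
  have hcr : ∀ i j : Fin β, i < j → ∀ a b, cross ((i, j), (a, b)) ∈ W := by
    intro i j hij a b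
    refine Finset.mem_union_left _ (Finset.mem_image_of_mem _ ?_)
    simp [L, hij]
  have hsg : ∀ (i : Fin β) (p q : Fin n), p < q → single (i, (p, q)) ∈ W := by
    intro i p q hpq
    refine Finset.mem_union_right _ (Finset.mem_image_of_mem _ ?_)
    simp [L, hpq]
  have hW : ∀ pr ∈ W, (∃ i j a b, i < j ∧ pr = cross ((i, j), (a, b))) ∨
      (∃ i p q, p < q ∧ pr = single (i, (p, q))) := by
    intro pr hpr
    rcases Finset.mem_union.1 hpr with h | h
    · obtain ⟨⟨⟨i, j⟩, a, b⟩, ht, rfl⟩ := Finset.mem_image.1 h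
      exact Or.inl ⟨i, j, a, b, by simpa [L] using ht, rfl⟩
    · obtain ⟨⟨i, p, q⟩, ht, rfl⟩ := Finset.mem_image.1 h
      exact Or.inr ⟨i, p, q, by simpa [L] using ht, rfl⟩
  have hcov : ∀ x, ∃ a, x ∈ Q a := by
    intro x
    have : x ∈ Finset.univ.biUnion Q := hcover ▸ Finset.mem_univ x
    simpa using this
  have hdQ : ∀ (a : Fin k) (i : Fin β), ∀ u ∈ Q a ×ˢ ({i} : Finset (Fin β)),
      ∀ v ∈ Q a ×ˢ ({i} : Finset (Fin β)), d u v ≤ 1 := by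
    rintro a i ⟨x, i'⟩ hu ⟨y, j'⟩ hv
    simp only [Finset.mem_product, Finset.mem_singleton] at hu hv
    obtain ⟨hx, rfl⟩ := hu
    obtain ⟨hy, rfl⟩ := hv
    by_cases hxy : x = y
    · subst hxy
      rw [hdiag]
      exact zero_le_one
    · exact (hadj x y _ hxy (hclique a hx hy hxy)).le
  refine ⟨W, ⟨?_, ?_⟩, ?_, ?_⟩
  · intro pr hpr
    refine ⟨Finset.subset_univ _, Finset.subset_univ _, ?_⟩
    rcases hW pr hpr with ⟨i, j, a, b, hij, rfl⟩ | ⟨i, p, q, hpq, rfl⟩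
    · refine ⟨(hne a).product (Finset.singleton_nonempty i),
        (hne b).product (Finset.singleton_nonempty j), ?_⟩
      exact Finset.disjoint_product.2 (Or.inr (by simpa using hij.ne))
    · simp [single, hpq.ne]
  · rintro ⟨x, i⟩ - ⟨y, j⟩ - hxy
    obtain ⟨a, ha⟩ := hcov x
    obtain ⟨b, hb⟩ := hcov y
    rcases lt_trichotomy i j with hij | hij | hij
    · exact ⟨_, hcr i j hij a b, Or.inl (by simp [cross, ha, hb])⟩
    · subst hij
      have hne' : e x ≠ e y := fun h => hxy (by rw [e.injective h])
      rcases lt_or_gt_of_ne hne' with h | h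
      · exact ⟨_, hsg i _ _ h, Or.inl (by simp [single])⟩
      · exact ⟨_, hsg i _ _ h, Or.inr (by simp [single])⟩
    · exact ⟨_, hcr j i hij b a, Or.inr (by simp [cross, ha, hb])⟩
  · intro pr hpr
    rcases hW pr hpr with ⟨i, j, a, b, hij, rfl⟩ | ⟨i, p, q, hpq, rfl⟩
    · refine isWellSep3_of_bounds d _ _ 1 zero_le_one
        ((hne a).product (Finset.singleton_nonempty i))
        ((hne b).product (Finset.singleton_nonempty j)) (hdQ a i) (hdQ b j) ?_
      rintro ⟨x, i'⟩ hu ⟨y, j'⟩ hv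
      simp only [cross, Finset.mem_product, Finset.mem_singleton] at hu hv
      obtain ⟨-, rfl⟩ := hu
      obtain ⟨-, rfl⟩ := hv
      rw [hlayers x y _ _ hij.ne]
      norm_num
    · refine isWellSep3_of_bounds d _ _ 0 le_rfl (Finset.singleton_nonempty _)
        (Finset.singleton_nonempty _) (by simp [single, hdiag]) (by simp [single, hdiag]) ?_
      have hne' : e.symm p ≠ e.symm q := e.symm.injective.ne hpq.ne
      simp only [single, Finset.mem_singleton, forall_eq, mul_zero]
      by_cases h : G.Adj (e.symm p) (e.symm q)
      · rw [hadj _ _ _ hne' h]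
        exact zero_le_one
      · rw [hnadj _ _ _ hne' h]
        exact zero_le_two
  · refine (Finset.card_union_le _ _).trans (add_le_add ?_ ?_)
    · refine Finset.card_image_le.trans_eq ?_
      rw [Finset.card_product, card_lt_pairs]
      simp [sq]
    · refine Finset.card_image_le.trans_eq ?_
      rw [Finset.card_product, card_lt_pairs]
      simp
end

section
/- Let G be a finite simple graph on vertex set V with |V| = n ≥ 1, let β ≥ 2 be an integer, and let U = V × {1, …, β} carry the layered metric d defined by: d((x,i),(y,j)) = 3 if i ≠ j; d((x,i),(y,i)) = 1 if x ≠ y and xy is an edge of G; d((x,i),(y,i)) = 2 if x ≠ y and xy is not an edge of G; and d = 0 on the diagonal. If (U, d) admits a 3-WSPD of size m, then there exist at most ⌊2m/(β(β−1))⌋ cliques of G whose union is V. -/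
/-- If `d` is bounded by `3`, both sides of a `3`-well-separated pair of nonempty sets have all
their mutual distances at most `1`. -/
theorem dist_le_one_of_wellSep {X : Type*} {d : X → X → ℝ} (hd : ∀ u v, d u v ≤ 3)
    {A B : Finset X} (hA : A.Nonempty) (hB : B.Nonempty) (h : IsWellSep3 d A B) :
    (∀ u ∈ A, ∀ v ∈ A, d u v ≤ 1) ∧ (∀ u ∈ B, ∀ v ∈ B, d u v ≤ 1) := by
  have hfin : ∀ C D : Finset X, {r : ℝ | ∃ a ∈ C, ∃ b ∈ D, r = d a b}.Finite := by
    intro C D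
    refine (((C ×ˢ D).finite_toSet).image (fun p : X × X => d p.1 p.2)).subset ?_
    rintro r ⟨a, ha, b, hb, rfl⟩
    exact ⟨(a, b), by simp [ha, hb], rfl⟩
  have hdiam : ∀ C : Finset X, ∀ u ∈ C, ∀ v ∈ C, d u v ≤ fdiamD d C := fun C u hu v hv =>
    le_csSup (hfin C C).bddAbove ⟨u, hu, v, hv, rfl⟩
  obtain ⟨a, ha⟩ := hA
  obtain ⟨b, hb⟩ := hB
  have hmin : dminD d A B ≤ 3 :=
    (csInf_le (hfin A B).bddBelow ⟨a, ha, b, hb, rfl⟩).trans (hd a b)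
  obtain ⟨h1, h2⟩ := max_le_iff.mp h
  exact ⟨fun u hu v hv => by linarith [hdiam A u hu v hv],
    fun u hu v hv => by linarith [hdiam B u hu v hv]⟩

/-- Pigeonhole over ordered pairs of distinct labels: if each element of `W` carries two labels
`f`, `g`, then some `(i, j)` with `i ≠ j` is, up to order, the label pair of at most an average share
of `W`; each element is counted for at most two ordered pairs. -/
theorem exists_offDiag_card_le {α : Type*} [DecidableEq α] {β : ℕ} (hβ : 2 ≤ β) (W : Finset α)
    (f g : α → Fin β) :
    ∃ i j : Fin β, i ≠ j ∧
      (W.filter (fun p => (f p, g p) = (i, j) ∨ (g p, f p) = (i, j))).card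
        ≤ 2 * W.card / (β * (β - 1)) := by
  set E : Finset (Fin β × Fin β) := Finset.univ.offDiag with hE
  have hEcard : E.card = β * (β - 1) := by
    simp [hE, Finset.offDiag_card, Nat.mul_sub]
  have hpos : 0 < β * (β - 1) := Nat.mul_pos (by omega) (by omega)
  have hfib : ∀ h : α → Fin β × Fin β, ∑ e ∈ E, (W.filter (fun p => h p = e)).card ≤ W.card := by
    intro h
    rw [Finset.sum_card_fiberwise_eq_card_filter]
    exact Finset.card_filter_le _ _
  have hsum : ∑ e ∈ E, (W.filter (fun p => (f p, g p) = e ∨ (g p, f p) = e)).card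
      ≤ 2 * W.card := by
    calc _ ≤ ∑ e ∈ E, ((W.filter (fun p => (f p, g p) = e)).card
              + (W.filter (fun p => (g p, f p) = e)).card) := by
          refine Finset.sum_le_sum fun e _ => ?_
          rw [Finset.filter_or]
          exact Finset.card_union_le _ _
      _ ≤ 2 * W.card := by
          rw [Finset.sum_add_distrib]
          linarith [hfib (fun p => (f p, g p)), hfib (fun p => (g p, f p))]
  by_contra! hcon
  have hlow : E.card * (2 * W.card / (β * (β - 1)) + 1)
      ≤ ∑ e ∈ E, (W.filter (fun p => (f p, g p) = e ∨ (g p, f p) = e)).card := by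
    rw [← smul_eq_mul]
    refine Finset.card_nsmul_le_sum _ _ _ ?_
    rintro ⟨i, j⟩ he
    exact hcon i j (by simpa [hE] using he)
  rw [hEcard] at hlow
  have := Nat.lt_mul_div_succ (2 * W.card) hpos
  omega

theorem stmt14 {V : Type*} [Fintype V] [DecidableEq V]
    (G : SimpleGraph V) (n : ℕ) (hn : Fintype.card V = n) (hn1 : 1 ≤ n)
    (β : ℕ) (hβ : 2 ≤ β)
    (d : V × Fin β → V × Fin β → ℝ)
    (hdiag : ∀ u : V × Fin β, d u u = 0)
    (hlayers : ∀ (x y : V) (i j : Fin β), i ≠ j → d (x, i) (y, j) = 3)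
    (hadj : ∀ (x y : V) (i : Fin β), x ≠ y → G.Adj x y → d (x, i) (y, i) = 1)
    (hnadj : ∀ (x y : V) (i : Fin β), x ≠ y → ¬ G.Adj x y → d (x, i) (y, i) = 2)
    (m : ℕ) (W : Finset (Finset (V × Fin β) × Finset (V × Fin β)))
    (hW : PairDecomp (Finset.univ : Finset (V × Fin β)) W)
    (hsep : ∀ pr ∈ W, IsWellSep3 d pr.1 pr.2)
    (hcard : W.card = m) :
    ∃ t : ℕ, t ≤ 2 * m / (β * (β - 1)) ∧
      ∃ Q : Fin t → Finset V,
        (∀ i, G.IsClique (Q i : Set V)) ∧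
        Finset.univ.biUnion Q = (Finset.univ : Finset V) := by
  classical
  have hd3 : ∀ u v, d u v ≤ 3 := by
    rintro ⟨x, i⟩ ⟨y, j⟩
    by_cases hij : i = j
    · subst hij
      by_cases hxy : x = y
      · subst hxy; rw [hdiag]; norm_num
      · by_cases hG : G.Adj x y
        · rw [hadj x y i hxy hG]; norm_num
        · rw [hnadj x y i hxy hG]; norm_num
    · exact (hlayers x y i j hij).le
  have hlay : ∀ u v : V × Fin β, d u v ≤ 1 → u.2 = v.2 := by
    rintro ⟨x, i⟩ ⟨y, j⟩ h
    by_contra hij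
    rw [hlayers x y i j hij] at h
    norm_num at h
  have hclq : ∀ (x y : V) (i : Fin β), x ≠ y → d (x, i) (y, i) ≤ 1 → G.Adj x y := by
    intro x y i hxy h
    by_contra hG
    rw [hnadj x y i hxy hG] at h
    norm_num at h
  have hone : ∀ pr ∈ W, (∀ u ∈ pr.1, ∀ v ∈ pr.1, d u v ≤ 1) ∧
      (∀ u ∈ pr.2, ∀ v ∈ pr.2, d u v ≤ 1) := fun pr hpr =>
    dist_le_one_of_wellSep hd3 (hW.1 pr hpr).2.2.1 (hW.1 pr hpr).2.2.2.1 (hsep pr hpr)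
  -- `L A` is the layer of some point of `A`, hence of all of them when `A` has diameter at most `1`.
  obtain ⟨L, hL⟩ : ∃ L : Finset (V × Fin β) → Fin β,
      ∀ A : Finset (V × Fin β), (∀ u ∈ A, ∀ v ∈ A, d u v ≤ 1) → ∀ u ∈ A, u.2 = L A := by
    refine ⟨fun A => if h : A.Nonempty then h.choose.2 else ⟨0, by omega⟩, fun A hA u hu => ?_⟩
    have h : A.Nonempty := ⟨u, hu⟩
    simp only [h, dif_pos]
    exact hlay _ _ (hA u hu _ h.choose_spec)
  have hL1 : ∀ pr ∈ W, ∀ u ∈ pr.1, u.2 = L pr.1 := fun pr hpr => hL _ (hone pr hpr).1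
  have hL2 : ∀ pr ∈ W, ∀ u ∈ pr.2, u.2 = L pr.2 := fun pr hpr => hL _ (hone pr hpr).2
  obtain ⟨i, j, hij, hle⟩ := exists_offDiag_card_le hβ W (fun pr => L pr.1) (fun pr => L pr.2)
  set S := W.filter (fun pr => (L pr.1, L pr.2) = (i, j) ∨ (L pr.2, L pr.1) = (i, j)) with hS
  refine ⟨S.card, hcard ▸ hle, ?_⟩
  -- The clique of a pair serving `{i, j}` is the projection of its side in layer `i`.
  refine ⟨fun k => Finset.univ.filter
    (fun x => (x, i) ∈ (S.equivFin.symm k).1.1 ∨ (x, i) ∈ (S.equivFin.symm k).1.2), ?_, ?_⟩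
  · intro k
    obtain ⟨hpW, hp⟩ := Finset.mem_filter.mp (S.equivFin.symm k).2
    set pr := (S.equivFin.symm k).1
    -- The two sides lie in different layers, so two layer-`i` points are on the same side.
    have hne : L pr.1 ≠ L pr.2 := by
      rcases hp with h | h <;> simp only [Prod.mk.injEq] at h <;> rw [h.1, h.2]
      · exact hij
      · exact hij.symm
    intro x hx y hy hxy
    simp only [Finset.coe_filter, Finset.mem_univ, true_and, Set.mem_ofPred_eq] at hx hy
    rcases hx with hx | hx <;> rcases hy with hy | hy
    · exact hclq x y i hxy ((hone pr hpW).1 _ hx _ hy)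
    · exact absurd ((hL1 pr hpW (x, i) hx).symm.trans (hL2 pr hpW (y, i) hy)) hne
    · exact absurd ((hL1 pr hpW (y, i) hy).symm.trans (hL2 pr hpW (x, i) hx)) hne
    · exact hclq x y i hxy ((hone pr hpW).2 _ hx _ hy)
  · refine Finset.eq_univ_of_forall fun x => ?_
    obtain ⟨pr, hpW, hpr⟩ := hW.2 (x, i) (Finset.mem_univ _) (x, j) (Finset.mem_univ _)
      (by simpa using hij)
    have hpS : pr ∈ S := by
      refine Finset.mem_filter.mpr ⟨hpW, ?_⟩
      rcases hpr with ⟨h1, h2⟩ | ⟨h1, h2⟩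
      · exact Or.inl (by rw [← hL1 pr hpW _ h1, ← hL2 pr hpW _ h2])
      · exact Or.inr (by rw [← hL2 pr hpW _ h1, ← hL1 pr hpW _ h2])
    refine Finset.mem_biUnion.mpr ⟨S.equivFin ⟨pr, hpS⟩, Finset.mem_univ _, ?_⟩
    simp only [Finset.mem_filter, Finset.mem_univ, true_and, Equiv.symm_apply_apply]
    exact hpr.imp And.left And.left
end
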